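/- Let C be a virtually-ℤ subgroup of a one-relator group with torsion G, and suppose that C is not contained in any infinite dihedral subgroup of G (i.e. there is no subgroup D of G with C ≤ D and D infinite dihedral). Then there exists a malnormal infinite cyclic subgroup M of G with C ≤ M. -/

import Mathlib

/-- A group is *virtually-ℤ* if it has a finite-index subgroup isomorphic to `ℤ`. -/
def VirtuallyZ (G : Type*) [Group G] : Prop :=
  ∃ H : Subgroup G, H.FiniteIndex ∧ Nonempty (H ≃* Multiplicative ℤ)

/-- A subgroup `M` of `G` is *malnormal* if `g M g⁻¹ ∩ M ≠ 1` implies `g ∈ M`. -/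
def Subgroup.IsMalnormal {G : Type*} [Group G] (M : Subgroup G) : Prop :=
  ∀ g : G, (∃ x : G, x ≠ 1 ∧ x ∈ M ∧ g * x * g⁻¹ ∈ M) → g ∈ M

/-- A group is a *free product of cyclic groups* if it is isomorphic to the free product
(`Monoid.CoprodI`) of a family of cyclic groups; every cyclic group is isomorphic to
`Multiplicative (ZMod m)` for some `m : ℕ` (with `m = 0` giving the infinite cyclic group). -/
def IsFreeProductOfCyclics (G : Type*) [Group G] : Prop :=
  ∃ (ι : Type) (m : ι → ℕ),
    Nonempty (G ≃* Monoid.CoprodI fun i => Multiplicative (ZMod (m i)))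

/-- A group is *freely decomposable* if it is isomorphic to a free product of two
nontrivial groups. -/
def FreelyDecomposable (G : Type*) [Group G] : Prop :=
  ∃ (H K : Type) (gH : Group H) (gK : Group K),
    Nontrivial H ∧ Nontrivial K ∧
      Nonempty (G ≃* (letI := gH; letI := gK; Monoid.Coprod H K))

/-- A group is *freely indecomposable* if it is not isomorphic to a free product of two
nontrivial groups. -/
def FreelyIndecomposable (G : Type*) [Group G] : Prop := ¬ FreelyDecomposable G

/-!
The main point is that in `G = ⟨X; Rⁿ⟩` every nontrivial `h` generates a subgroup of finite index in
its centralizer. Then centralizers of elements of infinite order are cyclic, and `C` has an element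
of infinite order, whose centralizer is generated by some `z` with `c z c⁻¹ = z ^ (±1)` for all
`c ∈ C`. If some `g` inverts `z`, it is an involution and `C ≤ ⟨z, g⟩` is contained in an infinite
dihedral group. Otherwise `⟨z⟩` is malnormal and contains `C`.

For the finite index, let `g` commute with `h` in `G`, and lift both to the free group `F` on `X`.
Finitely many conjugates of the relator witness that they commute; let `J ≤ F` be generated by them
and `h`. Attach a 2-cell to the Schreier graph of `F / J` for every closed path which reads `Rⁿ`,
and collapse cells of the resulting complex through free faces as long as these faces lie off the
two paths which read `h` from the cosets `J` and `g J`. A subcomplex obtained by collapsing carries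
the same flat cochains as the whole, with values in any group, and in particular it joins `J` to
`g J`: otherwise the cochain reading off words in `G` near `J` and trivial near `g J` would be
trivial on `h` at `g J` but not at `J`, although `g⁻¹ h g` and `h` differ by relators.

It remains to bound the number of cells which are left in terms of `h` alone, since then some
word of bounded length leads from `J` to `g J`, and so represents `g` modulo `⟨h⟩`. A bi-invariant
order on `F` selects, at every vertex and at every edge, the cell passing there with the largest
cyclic conjugate of `R`. Counting these selections shows that, up to the number of edges on the two
paths, the cells are at most as many as the edges exceed the vertices. On the other hand, cohomology
with coefficients in `ℤ/n` bounds this excess by one more than the number of relators needed; a cell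
whose boundary is the `n`-th power of a closed path imposes no condition there, and of the others at
least two have the same boundary up to rotation, so half as many relators as cells suffice.
-/

/-! ### Malnormal cyclic subgroups -/

section MalnormalCyclic

variable {G : Type*} [Group G]

/-- Every nontrivial element generates a subgroup of finite index in its centralizer. For
one-relator groups with torsion this is a weak form of Newman's theorem that centralizers are
cyclic. -/
def FiniteIndexCentralizers (G : Type*) [Group G] : Prop :=
  ∀ h : G, h ≠ 1 → (Subgroup.zpowers h).IsFiniteRelIndex (Subgroup.centralizer {h})

/-- An element is isolated if it has infinite order and generates the centralizer of each of its
nontrivial powers. These are the generators of the maximal infinite cyclic subgroups when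
centralizers are cyclic. -/
def IsIsolated (z : G) : Prop :=
  ¬IsOfFinOrder z ∧ ∀ m : ℤ, m ≠ 0 → Subgroup.centralizer {z ^ m} ≤ Subgroup.zpowers z

lemma not_isOfFinOrder_zpow {z : G} (hz : ¬IsOfFinOrder z) {m : ℤ} (hm : m ≠ 0) :
    ¬IsOfFinOrder (z ^ m) := by
  rw [← injective_zpow_iff_not_isOfFinOrder] at hz ⊢
  intro i j hij
  simp only [← zpow_mul] at hij
  exact mul_left_cancel₀ hm (hz hij)

theorem isCyclic_of_isCyclic_le_center {H : Subgroup G} [IsCyclic H] [H.FiniteIndex]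
    (hH : H ≤ Subgroup.center G) (htf : ∀ g : G, IsOfFinOrder g → g = 1) : IsCyclic G := by
  open scoped IsMulCommutative in
  refine isCyclic_of_injective (MonoidHom.transfer (MonoidHom.id H))
    ((injective_iff_map_eq_one _).2 fun g hg => ?_)
  have hcentral (k : ℕ) (g₀ : G) (h : g₀⁻¹ * g ^ k * g₀ ∈ H) : g₀⁻¹ * g ^ k * g₀ = g ^ k := by
    have := Subgroup.mem_center_iff.1 (hH h) g₀
    rwa [mul_assoc, mul_inv_cancel_left, ← mul_assoc, eq_comm, mul_left_inj] at this
  rw [MonoidHom.transfer_eq_pow _ g hcentral] at hg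
  exact htf g (isOfFinOrder_iff_pow_eq_one.2
    ⟨H.index, Nat.pos_of_ne_zero Subgroup.FiniteIndex.index_ne_zero, congrArg Subtype.val hg⟩)

namespace FiniteIndexCentralizers

lemma eq_one_of_isOfFinOrder (hG : FiniteIndexCentralizers G) {h t : G} (hh : ¬IsOfFinOrder h)
    (hth : Commute h t) (ht : IsOfFinOrder t) : t = 1 := by
  by_contra hne
  have := hG t hne
  obtain ⟨m, hm, -, hmem⟩ := Subgroup.exists_pow_mem_of_relIndex_ne_zero
    (Subgroup.relIndex_ne_zero (H := Subgroup.zpowers t))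
    (Subgroup.mem_centralizer_singleton_iff.2 hth)
  obtain ⟨i, hi⟩ := (Subgroup.mem_inf.1 hmem).1
  exact hh (IsOfFinOrder.of_pow (hi ▸ ht.zpow) hm.ne')

lemma isCyclic_centralizer (hG : FiniteIndexCentralizers G) {h : G} (hh : ¬IsOfFinOrder h) :
    IsCyclic (Subgroup.centralizer {h}) := by
  have := hG h (by rintro rfl; exact hh IsOfFinOrder.one)
  have hle : Subgroup.zpowers h ≤ Subgroup.centralizer {h} :=
    Subgroup.zpowers_le.2 (Subgroup.mem_centralizer_singleton_iff.2 rfl)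
  have : IsCyclic ((Subgroup.zpowers h).subgroupOf (Subgroup.centralizer {h})) :=
    (Subgroup.subgroupOfEquivOfLe hle).isCyclic.2 inferInstance
  refine isCyclic_of_isCyclic_le_center
    (H := (Subgroup.zpowers h).subgroupOf (Subgroup.centralizer {h})) ?_ fun g hg => ?_
  · rintro ⟨_, _⟩ ⟨i, rfl⟩
    refine Subgroup.mem_center_iff.2 fun g => Subtype.ext ?_
    exact Commute.zpow_right (Subgroup.mem_centralizer_singleton_iff.1 g.2) i
  · exact Subtype.ext (hG.eq_one_of_isOfFinOrder hh
      (Subgroup.mem_centralizer_singleton_iff.1 g.2).symm (Submonoid.isOfFinOrder_coe.2 hg))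

theorem exists_isIsolated (hG : FiniteIndexCentralizers G) {h : G} (hh : ¬IsOfFinOrder h) :
    ∃ z : G, IsIsolated z ∧ h ∈ Subgroup.zpowers z := by
  obtain ⟨z, hz⟩ := (Subgroup.isCyclic_iff_exists_zpowers_eq_top _).1 (hG.isCyclic_centralizer hh)
  have hhz : h ∈ Subgroup.zpowers z := hz ▸ Subgroup.mem_centralizer_singleton_iff.2 rfl
  obtain ⟨j, rfl⟩ := hhz
  have hz_inf : ¬IsOfFinOrder z := fun hfin => hh hfin.zpow
  refine ⟨z, ⟨hz_inf, fun m hm g hg => hz ▸ ?_⟩, j, rfl⟩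
  -- `g` and `z` both lie in the cyclic centralizer of `z ^ m`, so they commute.
  have := hG.isCyclic_centralizer (not_isOfFinOrder_zpow hz_inf hm)
  have hzm : z ∈ Subgroup.centralizer {z ^ m} :=
    Subgroup.mem_centralizer_singleton_iff.2 (Commute.self_zpow z m)
  have hcomm : Commute g z := congrArg Subtype.val
    (IsMulCommutative.is_comm.comm (⟨g, hg⟩ : Subgroup.centralizer {z ^ m}) ⟨z, hzm⟩)
  exact Subgroup.mem_centralizer_singleton_iff.2 (hcomm.zpow_right j)

end FiniteIndexCentralizers

namespace IsIsolated

variable {z g c : G}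

lemma zpow_injective (hz : IsIsolated z) : Function.Injective fun i : ℤ => z ^ i :=
  injective_zpow_iff_not_isOfFinOrder.2 hz.1

lemma mem_zpowers_of_commute (hz : IsIsolated z) {m : ℤ} (hm : m ≠ 0) (h : Commute g (z ^ m)) :
    g ∈ Subgroup.zpowers z :=
  hz.2 m hm (Subgroup.mem_centralizer_singleton_iff.2 h)

lemma mem_zpowers_of_conj_eq (hz : IsIsolated z) (h : g * z * g⁻¹ = z) :
    g ∈ Subgroup.zpowers z :=
  hz.mem_zpowers_of_commute one_ne_zero (by rw [zpow_one]; exact mul_inv_eq_iff_eq_mul.1 h)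

lemma ne_zero_of_conj_zpow_eq (hz : IsIsolated z) {a b : ℤ} (ha : a ≠ 0)
    (h : g * z ^ a * g⁻¹ = z ^ b) : b ≠ 0 := by
  rintro rfl
  rw [zpow_zero, conj_eq_one_iff] at h
  exact ha (hz.zpow_injective (h.trans (zpow_zero z).symm))

lemma conj_mem_zpowers (hz : IsIsolated z) {a b : ℤ} (ha : a ≠ 0)
    (h : g * z ^ a * g⁻¹ = z ^ b) : g * z * g⁻¹ ∈ Subgroup.zpowers z := by
  have hb := hz.ne_zero_of_conj_zpow_eq ha h
  refine hz.mem_zpowers_of_commute hb ?_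
  rw [← h, ← conj_zpow]
  exact Commute.self_zpow _ a

lemma conj_eq_or_conj_eq_inv (hz : IsIsolated z) {a b : ℤ} (ha : a ≠ 0)
    (h : g * z ^ a * g⁻¹ = z ^ b) : g * z * g⁻¹ = z ∨ g * z * g⁻¹ = z⁻¹ := by
  obtain ⟨i, hi⟩ := hz.conj_mem_zpowers ha h
  have hb := hz.ne_zero_of_conj_zpow_eq ha h
  obtain ⟨k, hk⟩ : g⁻¹ * z * g ∈ Subgroup.zpowers z := by
    simpa using hz.conj_mem_zpowers (g := g⁻¹) hb (b := a) (by rw [← h]; group)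
  have hik : k * i = 1 := hz.zpow_injective <| by
    change z ^ (k * i) = z ^ (1 : ℤ)
    change z ^ i = _ at hi
    change z ^ k = _ at hk
    rw [mul_comm, zpow_mul, hi, conj_zpow, hk]
    group
  rcases Int.isUnit_iff.1 (.of_mul_eq_one_right _ hik) with rfl | rfl
  · exact .inl (by simpa using hi.symm)
  · exact .inr (by simpa using hi.symm)

theorem isMalnormal_zpowers (hz : IsIsolated z) (hinv : ∀ g : G, g * z * g⁻¹ ≠ z⁻¹) :
    (Subgroup.zpowers z).IsMalnormal := by
  rintro g ⟨_, hne, ⟨a, rfl⟩, b, hb⟩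
  have ha : a ≠ 0 := by rintro rfl; exact hne (zpow_zero z)
  exact hz.mem_zpowers_of_conj_eq
    ((hz.conj_eq_or_conj_eq_inv ha hb.symm).resolve_right (hinv g))

lemma conj_eq_or_conj_eq_inv_of_mem (hz : IsIsolated z) {C : Subgroup G} {H : Subgroup C}
    [H.FiniteIndex] {h : C} (hH : H ≤ Subgroup.zpowers h) (hh : (h : G) ≠ 1)
    (hhz : (h : G) ∈ Subgroup.zpowers z) (hc : c ∈ C) :
    c * z * c⁻¹ = z ∨ c * z * c⁻¹ = z⁻¹ := by
  obtain ⟨j, hj⟩ := hhz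
  change z ^ j = h at hj
  obtain ⟨m, hm, -, hmem⟩ := Subgroup.exists_pow_mem_of_index_ne_zero
    (Subgroup.FiniteIndex.index_ne_zero (H := H)) (⟨c, hc⟩ * h * ⟨c, hc⟩⁻¹)
  obtain ⟨i, hi⟩ := hH hmem
  have hconj : (h : G) ^ i = c * (h : G) ^ m * c⁻¹ := by
    simpa [conj_pow] using congrArg Subtype.val hi
  have hj0 : j ≠ 0 := by
    rintro rfl
    exact hh (by rw [← hj, zpow_zero])
  refine hz.conj_eq_or_conj_eq_inv (a := j * m) (b := j * i) (by positivity) ?_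
  rw [zpow_mul, zpow_mul, hj, hconj, zpow_natCast]

lemma mul_self_eq_one (hz : IsIsolated z) (hg : g * z * g⁻¹ = z⁻¹) : g * g = 1 := by
  obtain ⟨i, hi⟩ : g * g ∈ Subgroup.zpowers z := hz.mem_zpowers_of_conj_eq <| by
    calc g * g * z * (g * g)⁻¹ = g * (g * z * g⁻¹) * g⁻¹ := by group
      _ = g * z⁻¹ * g⁻¹ := by rw [hg]
      _ = z := by rw [← conj_inv, hg, inv_inv]
  change z ^ i = g * g at hi
  have hneg : z ^ i = z ^ (-i) := by
    calc z ^ i = g * z ^ i * g⁻¹ := by rw [hi]; group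
      _ = z ^ (-i) := by rw [← conj_zpow, hg, inv_zpow, zpow_neg]
  have hi0 : i = 0 := by have : i = -i := hz.zpow_injective hneg; omega
  rw [← hi, hi0, zpow_zero]

end IsIsolated

lemma mul_zpow_eq_of_conj_eq_inv {z g : G} (hg : g * z * g⁻¹ = z⁻¹) (i : ℤ) :
    g * z ^ i = z ^ (-i) * g := by
  rw [← mul_inv_eq_iff_eq_mul, ← conj_zpow, hg, inv_zpow, zpow_neg]

/-- The homomorphism from the infinite dihedral group determined by the image `z` of the
translation and the image `g` of a reflection. -/
def dihedralHom (z g : G) (hg : g * z * g⁻¹ = z⁻¹) (hgg : g * g = 1) : DihedralGroup 0 →* G where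
  toFun
    | .r i => z ^ (show ℤ from i)
    | .sr i => g * z ^ (show ℤ from i)
  map_one' := zpow_zero z
  map_mul' := by
    rintro (a | a) (b | b)
    · exact zpow_add z a b
    · change g * z ^ ((show ℤ from b) - (show ℤ from a)) = z ^ (show ℤ from a) * (g * z ^ _)
      rw [← mul_assoc, ← neg_neg (show ℤ from a), ← mul_zpow_eq_of_conj_eq_inv hg, mul_assoc,
        ← zpow_add, neg_neg, neg_add_eq_sub]
    · change g * z ^ ((show ℤ from a) + (show ℤ from b)) = _
      rw [zpow_add, mul_assoc]
    · change z ^ ((show ℤ from b) - (show ℤ from a)) = (g * z ^ (show ℤ from a)) * (g * z ^ _)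
      rw [mul_zpow_eq_of_conj_eq_inv hg, mul_assoc, ← mul_assoc g, hgg, one_mul, ← zpow_add,
        neg_add_eq_sub]

lemma IsIsolated.dihedralHom_injective {z g : G} (hz : IsIsolated z) (hg : g * z * g⁻¹ = z⁻¹)
    (hgg : g * g = 1) : Function.Injective (dihedralHom z g hg hgg) := by
  refine (injective_iff_map_eq_one _).2 ?_
  rintro (i | i) hi
  · exact congrArg DihedralGroup.r (hz.zpow_injective (hi.trans (zpow_zero z).symm))
  · -- A reflection mapped to `1` would make `g` a power of `z`, so `g` would centralize `z`.
    have hgz : g = z ^ (-(show ℤ from i)) := by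
      rw [zpow_neg]
      exact eq_inv_of_mul_eq_one_left hi
    have hzz : z = z⁻¹ := by
      rw [← hg, eq_mul_inv_iff_mul_eq, hgz]
      exact Commute.self_zpow z _
    have : (1 : ℤ) = -1 := hz.zpow_injective (by simpa using hzz)
    omega

theorem IsIsolated.le_range_dihedralHom {z g : G} (hz : IsIsolated z) (hg : g * z * g⁻¹ = z⁻¹)
    (hgg : g * g = 1) {C : Subgroup G} (hC : ∀ c ∈ C, c * z * c⁻¹ = z ∨ c * z * c⁻¹ = z⁻¹) :
    C ≤ (dihedralHom z g hg hgg).range := by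
  intro c hc
  rcases hC c hc with h | h
  · obtain ⟨i, rfl⟩ := hz.mem_zpowers_of_conj_eq h
    exact ⟨.r i, rfl⟩
  · obtain ⟨i, hi⟩ : g * c ∈ Subgroup.zpowers z := hz.mem_zpowers_of_conj_eq <| by
      calc g * c * z * (g * c)⁻¹ = g * (c * z * c⁻¹) * g⁻¹ := by group
        _ = (g * z * g⁻¹)⁻¹ := by rw [h, conj_inv]
        _ = z := by rw [hg, inv_inv]
    refine ⟨.sr i, ?_⟩
    change g * z ^ i = c
    change z ^ i = g * c at hi
    rw [hi, ← mul_assoc, hgg, one_mul]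

theorem FiniteIndexCentralizers.exists_isMalnormal (hG : FiniteIndexCentralizers G)
    {C : Subgroup G} (hC : VirtuallyZ C)
    (hD : ¬∃ D : Subgroup G, C ≤ D ∧ Nonempty (D ≃* DihedralGroup 0)) :
    ∃ M : Subgroup G, M.IsMalnormal ∧ Nonempty (M ≃* Multiplicative ℤ) ∧ C ≤ M := by
  obtain ⟨H, hH, ⟨e⟩⟩ := hC
  have : Infinite H := Infinite.of_injective e.symm e.symm.injective
  have : IsCyclic H := e.isCyclic.2 inferInstance
  obtain ⟨h, hh⟩ := (Subgroup.isCyclic_iff_exists_zpowers_eq_top H).1 ‹_›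
  have hh_inf : ¬IsOfFinOrder (h : G) := by
    have : ¬IsOfFinOrder h := by rwa [← infinite_zpowers, hh, ← Set.infinite_coe_iff]
    exact fun hfin => this (Submonoid.isOfFinOrder_coe.1 hfin)
  obtain ⟨z, hz, hhz⟩ := hG.exists_isIsolated hh_inf
  have hCz (c : G) (hc : c ∈ C) := hz.conj_eq_or_conj_eq_inv_of_mem hh.ge
    (fun h1 => hh_inf (h1 ▸ IsOfFinOrder.one)) hhz hc
  by_cases hinv : ∃ g : G, g * z * g⁻¹ = z⁻¹
  · obtain ⟨g, hg⟩ := hinv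
    exact absurd ⟨_, hz.le_range_dihedralHom hg (hz.mul_self_eq_one hg) hCz,
      ⟨(MonoidHom.ofInjective (hz.dihedralHom_injective hg _)).symm⟩⟩ hD
  · push Not at hinv
    have : Infinite (Subgroup.zpowers z) := Set.infinite_coe_iff.2 (infinite_zpowers.2 hz.1)
    exact ⟨Subgroup.zpowers z, hz.isMalnormal_zpowers hinv, ⟨intCyclicMulEquiv.symm⟩, fun c hc =>
      hz.mem_zpowers_of_conj_eq ((hCz c hc).resolve_right (hinv c))⟩

end MalnormalCyclic

/-! ### Bi-invariant orders on free groups -/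

section Unipotent

variable {ι M : Type*} [AddCommGroup M]

/-- The automorphisms of `ι → M` which are unipotent with respect to a degree function `d`: they do
not change the lowest-degree coefficients of any `f`. -/
def unipotentAut (M : Type*) [AddCommGroup M] (d : ι → ℕ) : Subgroup ((ι → M) ≃ₗ[ℤ] (ι → M)) where
  carrier := {A | ∀ f i, (∀ j, d j < d i → f j = 0) → A f i = f i}
  one_mem' _ _ _ := rfl
  mul_mem' {A B} hA hB f i hf := by
    have hBf (j : ι) (hj : d j < d i) : B f j = 0 :=
      (hB f j fun k hk => hf k (hk.trans hj)).trans (hf j hj)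
    exact (hA (B f) i hBf).trans (hB f i hf)
  inv_mem' {A} hA f i hf := by
    obtain ⟨g, rfl⟩ := A.surjective f
    change (A⁻¹ * A) g i = A g i
    rw [inv_mul_cancel]
    have hg (m : ℕ) : ∀ j, d j = m → m < d i → g j = 0 := by
      induction m using Nat.strong_induction_on with
      | _ m ih =>
        intro j hj hm
        rw [← hA g j fun k hk => ih (d k) (hj ▸ hk) k rfl ((hj ▸ hk).trans hm), hf j (hj ▸ hm)]
    exact (hA g i fun j hj => hg (d j) j rfl hj).symm

variable [LinearOrder M] [IsOrderedAddMonoid M] [LinearOrder ι] {d : ι → ℕ}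

lemma toLex_lt_of_mem_unipotentAut (hd : ∀ i j, d i < d j → i < j) {A : (ι → M) ≃ₗ[ℤ] (ι → M)}
    (hA : A ∈ unipotentAut M d) {f g : ι → M} (hfg : toLex f < toLex g) :
    toLex (A f) < toLex (A g) := by
  obtain ⟨i, heq, hlt⟩ := hfg
  have hzero (j : ι) (hj : j < i) : (g - f) j = 0 := sub_eq_zero.2 (heq j hj).symm
  have hA_eq (j : ι) (hj : j ≤ i) : A g j - A f j = (g - f) j := by
    rw [← Pi.sub_apply, ← map_sub]
    exact hA _ j fun k hk => hzero k ((hd k j hk).trans_le hj)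
  refine ⟨i, fun j hj => ?_, ?_⟩
  · exact (sub_eq_zero.1 ((hA_eq j hj.le).trans (hzero j hj))).symm
  · exact sub_pos.1 ((hA_eq i le_rfl).symm ▸ sub_pos.2 hlt)

lemma exists_wellFoundedLT_of_degree {ι : Type*} (d : ι → ℕ) :
    ∃ _ : LinearOrder ι, WellFoundedLT ι ∧ ∀ i j, d i < d j → i < j := by
  obtain ⟨_, _⟩ := exists_wellFoundedLT ι
  let e : ι → ℕ ×ₗ ι := fun i => toLex (d i, i)
  have he : Function.Injective e := fun i j h => congrArg (fun p : ℕ ×ₗ ι => (ofLex p).2) h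
  exact ⟨LinearOrder.lift' e he, ⟨InvImage.wf e (wellFounded_lt (α := ℕ ×ₗ ι))⟩,
    fun i j h => Prod.Lex.toLex_lt_toLex.2 (.inl h)⟩

/-- A group acting by unipotent automorphisms inherits a bi-invariant order from the lexicographic
order on a free orbit, as soon as right multiplication acts unipotently on the orbit as well. -/
theorem exists_biorder_of_unipotent {G : Type*} [Group G] {ι : Type*} (d : ι → ℕ)
    (ρ : G →* ((ι → ℤ) ≃ₗ[ℤ] (ι → ℤ))) (v : ι → ℤ) (hinj : Function.Injective fun g => ρ g v)
    (hleft : ∀ g, ρ g ∈ unipotentAut ℤ d)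
    (hright : ∀ g, ∃ B ∈ unipotentAut ℤ d, ∀ a, ρ (a * g) v = B (ρ a v)) :
    ∃ _ : LinearOrder G, MulLeftStrictMono G ∧ MulRightStrictMono G := by
  obtain ⟨_, _, hd⟩ := exists_wellFoundedLT_of_degree d
  let orbit : G → Lex (ι → ℤ) := fun g => toLex (ρ g v)
  let order : LinearOrder G := LinearOrder.lift' orbit (toLex.injective.comp hinj)
  refine ⟨order, ⟨fun c a b hab => ?_⟩, ⟨fun c a b hab => ?_⟩⟩
  · change toLex (ρ (c * a) v) < toLex (ρ (c * b) v)
    rw [map_mul, map_mul]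
    exact toLex_lt_of_mem_unipotentAut hd (hleft c) hab
  · obtain ⟨B, hB, hBv⟩ := hright c
    change toLex (ρ (a * c) v) < toLex (ρ (b * c) v)
    rw [hBv, hBv]
    exact toLex_lt_of_mem_unipotentAut hd hB hab

end Unipotent

namespace Magnus

/-- Linear automorphisms of the noncommutative power series with coefficients in `ℤ` and variables
in `X`, a series being encoded by its coefficient function `List X → ℤ`. -/
abbrev SeriesAut (X : Type*) := (List X → ℤ) ≃ₗ[ℤ] (List X → ℤ)

variable {X : Type*}

/-- The anti-automorphism of power series reversing all monomials. -/
def rev : SeriesAut X :=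
  LinearEquiv.funCongrLeft ℤ ℤ (List.reverse_involutive.toPerm _)

lemma rev_apply (f : List X → ℤ) (m : List X) : rev f m = f m.reverse := rfl

variable [DecidableEq X]

/-- The coefficients of the quotient of `f` by `1 + x` on the left. -/
def leftDiv (x : X) (f : List X → ℤ) : List X → ℤ
  | [] => f []
  | y :: m => f (y :: m) - if y = x then leftDiv x f m else 0

/-- Left multiplication by `1 + x` on power series. -/
def leftMul (x : X) : SeriesAut X where
  toFun f
    | [] => f []
    | y :: m => f (y :: m) + if y = x then f m else 0
  invFun := leftDiv x
  left_inv f := by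
    funext m
    induction m with
    | nil => rfl
    | cons y m ih => rw [leftDiv, ih, add_sub_cancel_right]
  right_inv f := by
    funext m
    cases m with
    | nil => rfl
    | cons y m => exact sub_add_cancel _ _
  map_add' f g := by
    funext m
    cases m with
    | nil => rfl
    | cons y m =>
      simp only [Pi.add_apply]
      split_ifs <;> abel
  map_smul' c f := by
    funext m
    cases m with
    | nil => rfl
    | cons y m => simp only [Pi.smul_apply, smul_add, smul_ite, smul_zero, RingHom.id_apply]

/-- Right multiplication by `1 + x`. -/
def rightMul (x : X) : SeriesAut X := rev * leftMul x * rev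

/-- The Magnus representation, sending a generator `x` to left multiplication by `1 + x`. -/
def rep : FreeGroup X →* SeriesAut X := FreeGroup.lift leftMul

/-- The power series `1`. -/
def one : List X → ℤ := Pi.single [] 1

lemma leftMul_cons (x y : X) (f : List X → ℤ) (m : List X) :
    leftMul x f (y :: m) = f (y :: m) + if y = x then f m else 0 := rfl

lemma rightMul_concat (x y : X) (f : List X → ℤ) (m : List X) :
    rightMul x f (m ++ [y]) = f (m ++ [y]) + if y = x then f m else 0 := by
  change leftMul x (rev f) (m ++ [y]).reverse = _
  rw [List.reverse_append, List.reverse_singleton, List.singleton_append, leftMul_cons, rev_apply,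
    rev_apply, List.reverse_cons, List.reverse_reverse]

lemma leftMul_commute_rightMul (x y : X) : Commute (leftMul x) (rightMul y) := by
  refine LinearEquiv.ext fun f => funext fun m => ?_
  change leftMul x (rightMul y f) m = rightMul y (leftMul x f) m
  have hnil (g : List X → ℤ) : rightMul y g [] = g [] := rfl
  have hsingle (g : List X → ℤ) (z : X) : rightMul y g [z] = g [z] + if z = y then g [] else 0 :=
    rightMul_concat y z g []
  rcases m with _ | ⟨z, m⟩
  · rfl
  rcases List.eq_nil_or_concat m with rfl | ⟨m, w, rfl⟩
  · rw [leftMul_cons, hsingle, hnil, hsingle, leftMul_cons]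
    exact add_right_comm _ _ _
  · rw [List.concat_eq_append, leftMul_cons, ← List.cons_append, rightMul_concat, rightMul_concat,
      rightMul_concat, List.cons_append, leftMul_cons, leftMul_cons]
    split_ifs <;> abel

lemma rep_commute_rightMul (g : FreeGroup X) (x : X) : Commute (rep g) (rightMul x) := by
  induction g using FreeGroup.induction_on with
  | C1 => rw [map_one]; exact Commute.one_left _
  | of y => rw [rep, FreeGroup.lift_apply_of]; exact leftMul_commute_rightMul y x
  | inv_of y ih => rw [map_inv]; exact ih.inv_left
  | mul a b ha hb => rw [map_mul]; exact ha.mul_left hb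

lemma rightMul_one (x : X) : rightMul x one = leftMul x one := by
  have hne {m : List X} (hm : m ≠ []) : one m = 0 := Pi.single_eq_of_ne hm _
  funext m
  rcases List.eq_nil_or_concat m with rfl | ⟨m, w, rfl⟩
  · rfl
  rw [List.concat_eq_append, rightMul_concat]
  rcases m with _ | ⟨z, m⟩
  · rfl
  · have hmw : m ++ [w] ≠ [] := List.append_ne_nil_of_right_ne_nil m (List.cons_ne_nil w [])
    rw [List.cons_append, leftMul_cons, hne (List.cons_ne_nil z (m ++ [w])),
      hne (List.cons_ne_nil z m), hne hmw, ite_self, ite_self]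

lemma leftMul_mem_unipotentAut (x : X) : leftMul x ∈ unipotentAut ℤ List.length := by
  rintro f (_ | ⟨y, m⟩) hf
  · rfl
  · rw [leftMul_cons, hf m (Nat.lt_succ_self _), ite_self, add_zero]

lemma rightMul_mem_unipotentAut (x : X) : rightMul x ∈ unipotentAut ℤ List.length := by
  intro f m hf
  change leftMul x (rev f) m.reverse = f m
  rw [leftMul_mem_unipotentAut x (rev f) m.reverse]
  · exact congrArg f m.reverse_reverse
  · intro j hj
    exact hf j.reverse (by rwa [List.length_reverse] at hj ⊢)

lemma rep_mem_unipotentAut (g : FreeGroup X) : rep g ∈ unipotentAut ℤ List.length := by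
  have : (rep : FreeGroup X →* _).range ≤ unipotentAut ℤ List.length :=
    FreeGroup.range_lift_le (Set.range_subset_iff.2 leftMul_mem_unipotentAut)
  exact this ⟨g, rfl⟩

lemma exists_rep_mul_eq (g : FreeGroup X) :
    ∃ B ∈ unipotentAut ℤ List.length, ∀ a : FreeGroup X, rep (a * g) one = B (rep a one) := by
  induction g using FreeGroup.induction_on with
  | C1 => exact ⟨1, one_mem _, fun a => by rw [mul_one]; rfl⟩
  | of x =>
    refine ⟨rightMul x, rightMul_mem_unipotentAut x, fun a => ?_⟩
    calc rep (a * FreeGroup.of x) one = rep a (leftMul x one) := by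
          rw [map_mul, rep, FreeGroup.lift_apply_of]; rfl
      _ = (rep a * rightMul x) one := by rw [← rightMul_one]; rfl
      _ = rightMul x (rep a one) := by rw [(rep_commute_rightMul a x).eq]; rfl
  | inv_of x ih =>
    obtain ⟨B, hB, h⟩ := ih
    refine ⟨B⁻¹, inv_mem hB, fun a => ?_⟩
    conv_rhs => rw [← inv_mul_cancel_right a (FreeGroup.of x), h]
    exact (LinearEquiv.symm_apply_apply B _).symm
  | mul b c hb hc =>
    obtain ⟨B, hB, hb⟩ := hb
    obtain ⟨C, hC, hc⟩ := hc
    refine ⟨C * B, mul_mem hC hB, fun a => ?_⟩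
    rw [← mul_assoc, hc, hb]
    rfl

lemma leftMul_zpow_of_head_ne {x : X} {m : List X} (hm : m.head? ≠ some x) (e : ℤ)
    (f : List X → ℤ) : (leftMul x ^ e) f m = f m := by
  have hone (f : List X → ℤ) : leftMul x f m = f m := by
    rcases m with _ | ⟨y, m⟩
    · rfl
    · rw [leftMul_cons, if_neg fun hy => hm (congrArg some hy), add_zero]
  induction e generalizing f with
  | zero => rw [zpow_zero]; rfl
  | succ e ih => rw [zpow_add_one]; exact (ih _).trans (hone f)
  | pred e ih =>
    obtain ⟨f, rfl⟩ := (leftMul x).surjective f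
    rw [zpow_sub_one, hone, ← ih f]
    exact congrArg (fun g => (leftMul x ^ (-(e : ℤ))) g m) ((leftMul x).symm_apply_apply f)

lemma leftMul_zpow_cons {x : X} {m : List X} (hm : m.head? ≠ some x) (e : ℤ)
    (f : List X → ℤ) : (leftMul x ^ e) f (x :: m) = f (x :: m) + e * f m := by
  have hone (f : List X → ℤ) : leftMul x f (x :: m) = f (x :: m) + f m := by
    rw [leftMul_cons, if_pos rfl]
  have hfix (f : List X → ℤ) : leftMul x f m = f m := by
    simpa using leftMul_zpow_of_head_ne hm 1 f
  induction e generalizing f with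
  | zero => rw [zpow_zero, zero_mul, add_zero]; rfl
  | succ e ih =>
    rw [zpow_add_one]
    change (leftMul x ^ (e : ℤ)) (leftMul x f) (x :: m) = _
    rw [ih, hone, hfix]
    ring
  | pred e ih =>
    obtain ⟨f, rfl⟩ := (leftMul x).surjective f
    have := ih f
    rw [zpow_sub_one, hone, hfix]
    refine (congrArg (fun g => (leftMul x ^ (-(e : ℤ))) g (x :: m))
      ((leftMul x).symm_apply_apply f)).trans ?_
    rw [ih]
    ring

/-- The series `f` has a nonzero coefficient at an alternating monomial beginning with the letter
`i` (the empty monomial if `i = none`), and none at longer alternating monomials. -/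
def LeadsWith (i : Option X) (f : List X → ℤ) : Prop :=
  ∃ u : List X, u.IsChain (· ≠ ·) ∧ u.head? = i ∧ f u ≠ 0 ∧
    ∀ v : List X, v.IsChain (· ≠ ·) → u.length < v.length → f v = 0

lemma leadsWith_leftMul_zpow {x : X} {i : Option X} {f : List X → ℤ} (hf : LeadsWith i f)
    (hi : i ≠ some x) {e : ℤ} (he : e ≠ 0) : LeadsWith (some x) ((leftMul x ^ e) f) := by
  obtain ⟨u, hu, rfl, hfu, hlong⟩ := hf
  have hxu : (x :: u).IsChain (· ≠ ·) :=
    hu.cons fun y hy => by rintro rfl; exact hi hy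
  refine ⟨x :: u, hxu, rfl, ?_, fun v hv hlen => ?_⟩
  · rw [leftMul_zpow_cons hi, hlong _ hxu (Nat.lt_succ_self _), zero_add]
    exact mul_ne_zero he hfu
  · rw [List.length_cons] at hlen
    by_cases hvx : v.head? = some x
    · obtain ⟨v, rfl⟩ := List.head?_eq_some_iff.1 hvx
      have hvx : v.head? ≠ some x := fun h => (List.isChain_cons.1 hv).1 x h rfl
      rw [leftMul_zpow_cons hvx, hlong _ hv (by omega), hlong v hv.tail (by simpa using hlen),
        mul_zero, add_zero]
    · rw [leftMul_zpow_of_head_ne hvx, hlong v hv (by omega)]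

lemma leadsWith_rep_word (w : Monoid.CoprodI.Word fun _ : X => FreeGroup Unit) :
    LeadsWith w.fstIdx (rep (freeGroupEquivCoprodI.symm w.prod) one) := by
  induction w using Monoid.CoprodI.Word.consRecOn with
  | empty =>
    refine ⟨[], List.isChain_nil, rfl, one_ne_zero, fun v _ hv => ?_⟩
    exact Pi.single_eq_of_ne (List.ne_nil_of_length_pos hv) _
  | cons x a w hx ha ih =>
    obtain ⟨e, rfl⟩ : ∃ e : ℤ, FreeGroup.of () ^ e = a :=
      ⟨_, FreeGroup.equivIntOfUnique.symm_apply_apply a⟩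
    have he : e ≠ 0 := by rintro rfl; exact ha (zpow_zero _)
    rw [Monoid.CoprodI.Word.fstIdx_cons, Monoid.CoprodI.Word.prod_cons]
    have hrep : rep (freeGroupEquivCoprodI.symm (Monoid.CoprodI.of (i := x)
        (FreeGroup.of () ^ e))) = leftMul x ^ e := by
      have hx : freeGroupEquivCoprodI.symm (Monoid.CoprodI.of (i := x) (FreeGroup.of ())) =
          FreeGroup.of x := by
        rw [MulEquiv.symm_apply_eq, freeGroupEquivCoprodI_apply, FreeGroup.lift_apply_of]
      rw [map_zpow, map_zpow, map_zpow, hx, rep, FreeGroup.lift_apply_of]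
    rw [map_mul, map_mul, hrep]
    exact leadsWith_leftMul_zpow ih hx he

theorem rep_one_injective : Function.Injective fun g : FreeGroup X => rep g one := by
  have htriv (g : FreeGroup X) (hg : rep g one = one) : g = 1 := by
    obtain ⟨w, hw⟩ := Monoid.CoprodI.Word.equiv.symm.surjective (freeGroupEquivCoprodI g)
    change w.prod = _ at hw
    have hlead := leadsWith_rep_word w
    rw [hw, MulEquiv.symm_apply_apply, hg] at hlead
    obtain ⟨u, -, hu, hne, -⟩ := hlead
    obtain rfl : u = [] := by_contra fun h => hne (Pi.single_eq_of_ne h _)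
    have hw_empty : w = .empty := by
      induction w using Monoid.CoprodI.Word.consRecOn with
      | empty => rfl
      | cons x a w hx ha => cases hu.trans (Monoid.CoprodI.Word.fstIdx_cons ..)
    rw [← map_eq_one_iff freeGroupEquivCoprodI (MulEquiv.injective _), ← hw, hw_empty,
      Monoid.CoprodI.Word.prod_empty]
  intro g h hgh
  refine inv_mul_eq_one.1 (htriv _ ?_)
  calc rep (g⁻¹ * h) one = rep g⁻¹ (rep h one) := by rw [map_mul]; rfl
    _ = rep g⁻¹ (rep g one) := congrArg _ hgh.symm
    _ = one := by rw [map_inv]; exact LinearEquiv.symm_apply_apply _ _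

end Magnus

theorem exists_biorder_freeGroup (X : Type*) :
    ∃ _ : LinearOrder (FreeGroup X), MulLeftStrictMono (FreeGroup X) ∧
      MulRightStrictMono (FreeGroup X) := by
  classical
  exact exists_biorder_of_unipotent List.length Magnus.rep Magnus.one Magnus.rep_one_injective
    Magnus.rep_mem_unipotentAut Magnus.exists_rep_mul_eq

/-! ### Holonomy in Schreier graphs -/

section Holonomy

variable {X Ω K : Type*} [Group K] [MulAction (FreeGroup X) Ω]

/-- The holonomy homomorphism of a cochain `φ` on the edges of the Schreier graph of `Ω`, where the
edge `(ω, x)` leads from `ω` to `x • ω`. -/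
def holonomyHom (φ : Ω × X → K) : FreeGroup X →* (Ω → K) ⋊[mulAutArrow] FreeGroup X :=
  FreeGroup.lift fun x => ⟨fun ω => φ ((FreeGroup.of x)⁻¹ • ω, x), FreeGroup.of x⟩

/-- The product of the values of the cochain `φ` along the path in the Schreier graph of `Ω` which
starts at `ω` and reads the word `w`, its last letter first. -/
def holonomy (φ : Ω × X → K) (w : FreeGroup X) (ω : Ω) : K := (holonomyHom φ w).left (w • ω)

variable (φ : Ω × X → K)

lemma holonomyHom_right (w : FreeGroup X) : (holonomyHom φ w).right = w := by
  have : SemidirectProduct.rightHom.comp (holonomyHom φ) = MonoidHom.id (FreeGroup X) :=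
    FreeGroup.ext_hom _ _ fun x => by
      rw [MonoidHom.comp_apply, holonomyHom, FreeGroup.lift_apply_of]; rfl
  exact DFunLike.congr_fun this w

@[simp]
lemma holonomy_one (ω : Ω) : holonomy φ 1 ω = 1 := by
  rw [holonomy, map_one]; rfl

lemma holonomy_of (x : X) (ω : Ω) : holonomy φ (FreeGroup.of x) ω = φ (ω, x) := by
  rw [holonomy, holonomyHom, FreeGroup.lift_apply_of]
  exact congrArg (fun ω => φ (ω, x)) (inv_smul_smul _ _)

lemma holonomy_mul (v w : FreeGroup X) (ω : Ω) :
    holonomy φ (v * w) ω = holonomy φ v (w • ω) * holonomy φ w ω := by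
  rw [holonomy, map_mul, SemidirectProduct.mul_left, holonomyHom_right, mul_smul]
  change _ * (holonomyHom φ w).left (v⁻¹ • v • w • ω) = _
  rw [inv_smul_smul]
  rfl

lemma holonomy_inv (w : FreeGroup X) (ω : Ω) :
    holonomy φ w⁻¹ ω = (holonomy φ w (w⁻¹ • ω))⁻¹ := by
  refine eq_inv_of_mul_eq_one_right ?_
  rw [← holonomy_mul, mul_inv_cancel, holonomy_one]

variable {φ}

lemma holonomy_pow {w : FreeGroup X} {ω : Ω} (h : w • ω = ω) (k : ℕ) :
    holonomy φ (w ^ k) ω = holonomy φ w ω ^ k := by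
  induction k with
  | zero => rw [pow_zero, pow_zero, holonomy_one]
  | succ k ih => rw [pow_succ, holonomy_mul, h, ih, pow_succ]

lemma holonomy_conj_eq_one {u w : FreeGroup X} {ω : Ω} (hfix : w • u⁻¹ • ω = u⁻¹ • ω)
    (hw : holonomy φ w (u⁻¹ • ω) = 1) : holonomy φ (u * w * u⁻¹) ω = 1 := by
  rw [holonomy_mul, holonomy_mul, hw, hfix, holonomy_inv, mul_one, mul_inv_cancel]

lemma eq_holonomy {c : FreeGroup X → Ω → K} (hof : ∀ x ω, c (FreeGroup.of x) ω = φ (ω, x))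
    (hmul : ∀ v w ω, c (v * w) ω = c v (w • ω) * c w ω) (w : FreeGroup X) (ω : Ω) :
    c w ω = holonomy φ w ω := by
  have hone (ω : Ω) : c 1 ω = 1 := by
    simpa only [mul_one, one_smul, left_eq_mul] using hmul 1 1 ω
  induction w using FreeGroup.induction_on generalizing ω with
  | C1 => rw [hone, holonomy_one]
  | of x => rw [hof, holonomy_of]
  | inv_of x ih =>
    rw [holonomy_inv, ← ih]
    refine eq_inv_of_mul_eq_one_right ?_
    rw [← hmul, mul_inv_cancel, hone]
  | mul v w hv hw => rw [hmul, holonomy_mul, hv, hw]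

lemma holonomy_mul_cochain {A : Type*} [CommGroup A] (φ ψ : Ω × X → A) (w : FreeGroup X) (ω : Ω) :
    holonomy (φ * ψ) w ω = holonomy φ w ω * holonomy ψ w ω := by
  refine (eq_holonomy (c := fun w ω => holonomy φ w ω * holonomy ψ w ω) (fun x ω => ?_)
    (fun v w ω => ?_) w ω).symm
  · rw [holonomy_of, holonomy_of, Pi.mul_apply]
  · rw [holonomy_mul, holonomy_mul, mul_mul_mul_comm]

variable (φ) in
/-- The elements of the stabilizer of `ω` with trivial holonomy at `ω`. -/
def flatStabilizer (ω : Ω) : Subgroup (FreeGroup X) where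
  carrier := {w | w • ω = ω ∧ holonomy φ w ω = 1}
  one_mem' := ⟨one_smul _ _, holonomy_one φ ω⟩
  mul_mem' := fun {v w} ⟨hv, hv1⟩ ⟨hw, hw1⟩ =>
    ⟨by rw [mul_smul, hw, hv], by rw [holonomy_mul, hw, hv1, hw1, one_mul]⟩
  inv_mem' := fun {w} ⟨hw, hw1⟩ => by
    have hw' : w⁻¹ • ω = ω := inv_smul_eq_iff.2 hw.symm
    exact ⟨hw', by rw [holonomy_inv, hw', hw1, inv_one]⟩

lemma exists_potential [MulAction.IsPretransitive (FreeGroup X) Ω] {p : Ω}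
    (hφ : MulAction.stabilizer (FreeGroup X) p ≤ flatStabilizer φ p) :
    ∃ f : Ω → K, ∀ ω x, φ (ω, x) = f (FreeGroup.of x • ω) * (f ω)⁻¹ := by
  choose g hg using MulAction.exists_smul_eq (FreeGroup X) p
  have hf (w : FreeGroup X) : holonomy φ (g (w • p)) p = holonomy φ w p := by
    have hfix : (w⁻¹ * g (w • p)) • p = p := by rw [mul_smul, hg, inv_smul_smul]
    have := (hφ (MulAction.mem_stabilizer_iff.2 hfix)).2
    rw [← mul_inv_cancel_left w (g (w • p)), holonomy_mul, hfix, this, mul_one]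
  refine ⟨fun ω => holonomy φ (g ω) p, fun ω x => eq_mul_inv_of_mul_eq ?_⟩
  calc φ (ω, x) * holonomy φ (g ω) p = holonomy φ (FreeGroup.of x * g ω) p := by
        rw [holonomy_mul, hg, holonomy_of]
    _ = holonomy φ (g (FreeGroup.of x • ω)) p := by rw [← hf, mul_smul, hg]

end Holonomy

section PathEdges

variable {X Ω K : Type*} [Group K] [MulAction (FreeGroup X) Ω]

/-- The edge of the Schreier graph which is crossed, possibly backwards, when reading the letter `a`
at `ω`. -/
def letterEdge (a : X × Bool) (ω : Ω) : Ω × X := (if a.2 then ω else FreeGroup.mk [a] • ω, a.1)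

/-- The edges crossed when reading a word at `ω`, its last letter first. -/
def pathEdges : List (X × Bool) → Ω → List (Ω × X)
  | [], _ => []
  | a :: l, ω => letterEdge a (FreeGroup.mk l • ω) :: pathEdges l ω

lemma freeGroup_mk_cons (a : X × Bool) (l : List (X × Bool)) :
    FreeGroup.mk (a :: l) = FreeGroup.mk [a] * FreeGroup.mk l :=
  (FreeGroup.mul_mk (L₁ := [a])).symm

lemma length_pathEdges (l : List (X × Bool)) (ω : Ω) : (pathEdges l ω).length = l.length := by
  induction l with
  | nil => rfl
  | cons a l ih => rw [pathEdges, List.length_cons, ih, List.length_cons]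

lemma map_snd_pathEdges (l : List (X × Bool)) (ω : Ω) :
    (pathEdges l ω).map Prod.snd = l.map Prod.fst := by
  induction l with
  | nil => rfl
  | cons a l ih => rw [pathEdges, List.map_cons, ih, List.map_cons, letterEdge]

lemma holonomy_letter (φ : Ω × X → K) (a : X × Bool) (ω : Ω) :
    holonomy φ (FreeGroup.mk [a]) ω =
      if a.2 then φ (letterEdge a ω) else (φ (letterEdge a ω))⁻¹ := by
  obtain ⟨x, _ | _⟩ := a
  · change holonomy φ (FreeGroup.of x)⁻¹ ω = _
    rw [holonomy_inv, holonomy_of]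
    rfl
  · exact holonomy_of φ x ω

lemma holonomy_congr {φ ψ : Ω × X → K} {l : List (X × Bool)} {ω : Ω}
    (h : ∀ e ∈ pathEdges l ω, φ e = ψ e) :
    holonomy φ (FreeGroup.mk l) ω = holonomy ψ (FreeGroup.mk l) ω := by
  induction l with
  | nil => exact (holonomy_one φ ω).trans (holonomy_one ψ ω).symm
  | cons a l ih =>
    obtain ⟨ha, hl⟩ := List.forall_mem_cons.1 h
    rw [freeGroup_mk_cons, holonomy_mul, holonomy_mul, ih hl, holonomy_letter, holonomy_letter, ha]

lemma exists_update_holonomy_eq_one [DecidableEq (Ω × X)] (φ : Ω × X → K) {a : X × Bool}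
    {l₁ l₂ : List (X × Bool)} {ω : Ω} {e : Ω × X} (ha : letterEdge a (FreeGroup.mk l₂ • ω) = e)
    (h₁ : e ∉ pathEdges l₁ (FreeGroup.mk (a :: l₂) • ω)) (h₂ : e ∉ pathEdges l₂ ω) :
    ∃ c : K, holonomy (Function.update φ e c) (FreeGroup.mk (l₁ ++ a :: l₂)) ω = 1 := by
  set v := holonomy φ (FreeGroup.mk l₁) (FreeGroup.mk (a :: l₂) • ω) with hv
  set w := holonomy φ (FreeGroup.mk l₂) ω with hw
  refine ⟨if a.2 then v⁻¹ * w⁻¹ else (v⁻¹ * w⁻¹)⁻¹, ?_⟩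
  have hcongr {l : List (X × Bool)} {ω : Ω} (he : e ∉ pathEdges l ω) (c : K) :
      holonomy (Function.update φ e c) (FreeGroup.mk l) ω = holonomy φ (FreeGroup.mk l) ω :=
    holonomy_congr fun _ he' => Function.update_of_ne (ne_of_mem_of_not_mem he' he) _ _
  rw [← FreeGroup.mul_mk, holonomy_mul, hcongr h₁, ← hv, freeGroup_mk_cons, holonomy_mul,
    hcongr h₂, ← hw, holonomy_letter, ha, Function.update_self]
  split_ifs <;> group

end PathEdges

/-! ### Cyclic words -/

section Shift

/-- The shift map on sequences. -/
def shift {α : Type*} (y : ℕ → α) : ℕ → α := fun t => y (t + 1)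

lemma iterate_shift {α : Type*} (y : ℕ → α) (a t : ℕ) : shift^[a] y t = y (t + a) := by
  induction a generalizing y with
  | zero => rfl
  | succ a ih => rw [Function.iterate_succ_apply, ih, shift, add_assoc]

end Shift

/-- A cyclically reduced cyclic word which is not a proper power, encoded as the periodic sequence
of its letters; its length is the minimal period of this sequence. -/
structure CyclicWord (X : Type*) where
  /-- The letters of the word, the rightmost one being `letter 0`. -/
  letter : ℕ → X × Bool
  periodic : letter ∈ Function.periodicPts shift
  reduced : ∀ t, letter (t + 1) ≠ ((letter t).1, !(letter t).2)

namespace CyclicWord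

variable {X : Type*} (D : CyclicWord X)

/-- The length of the word, that is, its minimal period. -/
noncomputable def length : ℕ := Function.minimalPeriod shift D.letter

/-- The word of length `k` whose rightmost letter has index `a`. -/
def segment (a : ℕ) : ℕ → List (X × Bool)
  | 0 => []
  | k + 1 => D.letter (a + k) :: segment a k

/-- The product of the `t` rightmost letters. -/
def suffix (t : ℕ) : FreeGroup X := FreeGroup.mk (D.segment 0 t)

/-- The element of the free group given by one period of the word. -/
noncomputable def root : FreeGroup X := D.suffix D.length

/-- The cyclic conjugate of the root obtained by starting to read at index `t`. -/
noncomputable def conjRoot (t : ℕ) : FreeGroup X := D.suffix t * D.root * (D.suffix t)⁻¹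

lemma length_pos : 0 < D.length := Function.minimalPeriod_pos_of_mem_periodicPts D.periodic

lemma letter_periodic : Function.Periodic D.letter D.length := fun t => by
  rw [← iterate_shift D.letter, length, Function.iterate_minimalPeriod]

lemma suffix_zero : D.suffix 0 = 1 := rfl

lemma suffix_succ (t : ℕ) : D.suffix (t + 1) = FreeGroup.mk [D.letter t] * D.suffix t := by
  rw [suffix, segment, freeGroup_mk_cons, zero_add, suffix]

lemma mk_segment_mul_suffix (a k : ℕ) :
    FreeGroup.mk (D.segment a k) * D.suffix a = D.suffix (a + k) := by
  induction k with
  | zero => exact one_mul _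
  | succ k ih => rw [segment, freeGroup_mk_cons, mul_assoc, ih, ← add_assoc, suffix_succ]

lemma suffix_add_mul_length (t k : ℕ) : D.suffix (t + k * D.length) = D.suffix t * D.root ^ k := by
  have hlength (t : ℕ) : D.suffix (t + D.length) = D.suffix t * D.root := by
    induction t with
    | zero => rw [zero_add, suffix_zero, one_mul, root]
    | succ t ih =>
      rw [add_right_comm, suffix_succ, ih, D.letter_periodic, suffix_succ, mul_assoc]
  induction k with
  | zero => rw [zero_mul, add_zero, pow_zero, mul_one]
  | succ k ih => rw [Nat.succ_mul, ← add_assoc, hlength, ih, pow_succ, mul_assoc]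

lemma suffix_eq_mod (t : ℕ) :
    D.suffix t = D.suffix (t % D.length) * D.root ^ (t / D.length) := by
  rw [← suffix_add_mul_length, mul_comm, Nat.mod_add_div]

lemma root_pow_eq (k : ℕ) : D.root ^ k = FreeGroup.mk (D.segment 0 (k * D.length)) := by
  rw [← one_mul (D.root ^ k), ← D.suffix_zero, ← suffix_add_mul_length, zero_add, suffix]

lemma conjRoot_zero : D.conjRoot 0 = D.root := by
  rw [conjRoot, suffix_zero, one_mul, inv_one, mul_one]

lemma conjRoot_mod (t : ℕ) : D.conjRoot (t % D.length) = D.conjRoot t := by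
  rw [conjRoot, conjRoot, suffix_eq_mod D t, mul_inv_rev]
  group

lemma conjRoot_eq (a : ℕ) : D.conjRoot a = FreeGroup.mk (D.segment a D.length) := by
  have := D.suffix_add_mul_length a 1
  rw [one_mul, pow_one] at this
  rw [conjRoot, ← this, ← mk_segment_mul_suffix, mul_inv_cancel_right]

lemma segment_isReduced (a k : ℕ) : FreeGroup.IsReduced (D.segment a k) := by
  induction k with
  | zero => exact List.isChain_nil
  | succ k ih =>
    cases k with
    | zero => exact List.isChain_singleton _
    | succ k =>
      refine List.isChain_cons_cons.2 ⟨fun hfst => ?_, ih⟩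
      by_contra hsnd
      exact D.reduced (a + k) (Prod.ext hfst (Bool.eq_not_of_ne hsnd))

lemma letter_add_eq_of_segment_eq {a b k : ℕ} (h : D.segment a k = D.segment b k) :
    ∀ i < k, D.letter (a + i) = D.letter (b + i) := by
  induction k with
  | zero => exact fun i hi => absurd hi (Nat.not_lt_zero i)
  | succ k ih =>
    obtain ⟨hhead, htail⟩ := List.cons.inj h
    exact Nat.forall_lt_succ_right.2 ⟨ih htail, hhead⟩

lemma conjRoot_injOn : Set.InjOn D.conjRoot (Set.Iio D.length) := by
  classical
  intro a ha b hb hab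
  rw [conjRoot_eq, conjRoot_eq] at hab
  have hseg : D.segment a D.length = D.segment b D.length := by
    have := congrArg FreeGroup.toWord hab
    rwa [FreeGroup.toWord_mk, FreeGroup.toWord_mk, (D.segment_isReduced _ _).reduce_eq,
      (D.segment_isReduced _ _).reduce_eq] at this
  refine Function.iterate_injOn_Iio_minimalPeriod (f := shift) (x := D.letter) ha hb ?_
  change shift^[a] D.letter = shift^[b] D.letter
  funext i
  rw [iterate_shift D.letter, iterate_shift D.letter, add_comm i, add_comm i]
  calc D.letter (a + i) = D.letter (a + i % D.length) :=
        ((D.letter_periodic.const_add a).map_mod_nat i).symm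
    _ = D.letter (b + i % D.length) :=
        D.letter_add_eq_of_segment_eq hseg _ (Nat.mod_lt _ D.length_pos)
    _ = D.letter (b + i) := (D.letter_periodic.const_add b).map_mod_nat i

/-- The index of the starting point of the edge crossed by the letter of index `t`. -/
def sourceIdx (t : ℕ) : ℕ := if (D.letter t).2 then t else t + 1

/-- The index of the end point of the edge crossed by the letter of index `t`. -/
def targetIdx (t : ℕ) : ℕ := if (D.letter t).2 then t + 1 else t

lemma suffix_targetIdx (t : ℕ) :
    D.suffix (D.targetIdx t) = FreeGroup.of (D.letter t).1 * D.suffix (D.sourceIdx t) := by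
  rcases h : D.letter t with ⟨x, b⟩
  cases b
  · simp only [targetIdx, sourceIdx, h, suffix_succ, Bool.false_eq_true, if_false]
    exact (mul_inv_cancel_left (FreeGroup.of x) (D.suffix t)).symm
  · simp only [targetIdx, sourceIdx, h, suffix_succ, if_true]
    rfl

lemma conjRoot_targetIdx (t : ℕ) : D.conjRoot (D.targetIdx t) =
    FreeGroup.of (D.letter t).1 * D.conjRoot (D.sourceIdx t) *
      (FreeGroup.of (D.letter t).1)⁻¹ := by
  rw [conjRoot, suffix_targetIdx, conjRoot]
  group

/-- The cyclic word read from index `a` on. -/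
def rotate (a : ℕ) : CyclicWord X where
  letter := shift^[a] D.letter
  periodic := by
    obtain ⟨n, hn, h⟩ := D.periodic
    exact ⟨n, hn, h.apply_iterate a⟩
  reduced t := by
    rw [iterate_shift, iterate_shift, add_right_comm]
    exact D.reduced _

lemma length_rotate (a : ℕ) : (D.rotate a).length = D.length :=
  Function.minimalPeriod_apply_iterate D.periodic a

lemma conjRoot_rotate (a t : ℕ) : (D.rotate a).conjRoot t = D.conjRoot (a + t) := by
  have hsegment (k : ℕ) : (D.rotate a).segment t k = D.segment (a + t) k := by
    induction k with
    | zero => rfl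
    | succ k ih =>
      have hletter : (D.rotate a).letter (t + k) = D.letter (a + t + k) := by
        change shift^[a] D.letter (t + k) = _
        rw [iterate_shift, add_comm, add_assoc]
      rw [segment, segment, ih, hletter]
  rw [conjRoot_eq, conjRoot_eq, length_rotate, hsegment]

section Existence

variable {w : List (X × Bool)}

/-- The periodic sequence of the letters of a nonempty list, read from right to left. -/
def cycle (w : List (X × Bool)) (hne : w ≠ []) (t : ℕ) : X × Bool :=
  w.reverse[t % w.length]'(by
    rw [List.length_reverse]; exact Nat.mod_lt _ (List.length_pos_iff.2 hne))

lemma iterate_shift_cycle (hne : w ≠ []) : shift^[w.length] (cycle w hne) = cycle w hne := by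
  funext t
  simp only [iterate_shift, cycle, Nat.add_mod_right]

lemma cycle_reduced (hw : FreeGroup.IsCyclicallyReduced w) (hne : w ≠ []) (t : ℕ) :
    cycle w hne (t + 1) ≠ ((cycle w hne t).1, !(cycle w hne t).2) := by
  have hpos : 0 < w.length := List.length_pos_iff.2 hne
  have hget (j : ℕ) (hj : j < (w.reverse ++ w.reverse).length) :
      (w.reverse ++ w.reverse)[j] = cycle w hne j := by
    rw [List.length_append, List.length_reverse] at hj
    simp only [cycle, List.getElem_append, List.length_reverse]
    split_ifs with h
    · simp only [Nat.mod_eq_of_lt h]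
    · simp only [Nat.mod_eq_sub_mod (not_lt.1 h), Nat.mod_eq_of_lt (show j - w.length < w.length by
        omega)]
  have hchain : FreeGroup.IsReduced (w ++ w) := by
    have := (hw.flatten_replicate 2).isReduced
    rwa [List.replicate_succ, List.replicate_one, List.flatten_cons, List.flatten_singleton] at this
  rw [FreeGroup.IsReduced, ← List.reverse_reverse (w ++ w), List.isChain_reverse,
    List.reverse_append, List.isChain_iff_getElem] at hchain
  have hstep := hchain (t % w.length) (by
    have := Nat.mod_lt t hpos
    rw [List.length_append, List.length_reverse]
    omega)
  rw [hget, hget] at hstep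
  have hmod (j k : ℕ) (h : j % w.length = k % w.length) : cycle w hne j = cycle w hne k := by
    simp only [cycle, h]
  rw [hmod (t % w.length) t (Nat.mod_mod _ _),
    hmod (t % w.length + 1) (t + 1) (Nat.mod_add_mod _ _ _)] at hstep
  intro h
  rw [h] at hstep
  exact Bool.not_ne_self _ (hstep rfl)

lemma exists_mk_eq_root_pow (hw : FreeGroup.IsCyclicallyReduced w) (hne : w ≠ []) :
    ∃ D : CyclicWord X, ∃ k, 0 < k ∧ FreeGroup.mk w = D.root ^ k := by
  have hpos : 0 < w.length := List.length_pos_iff.2 hne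
  let D : CyclicWord X :=
    ⟨cycle w hne, ⟨_, hpos, iterate_shift_cycle hne⟩, cycle_reduced hw hne⟩
  have hsegment (k : ℕ) (hk : k ≤ w.length) : D.segment 0 k = (w.reverse.take k).reverse := by
    induction k with
    | zero => rfl
    | succ k ih =>
      have hk' : k < w.reverse.length := by rwa [List.length_reverse]
      rw [segment, ih (Nat.le_of_succ_le hk), List.take_succ_eq_append_getElem hk',
        List.reverse_append, List.reverse_singleton, List.singleton_append, zero_add]
      simp only [D, cycle, Nat.mod_eq_of_lt (Nat.lt_of_succ_le hk)]
  obtain ⟨k, hk⟩ : D.length ∣ w.length :=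
    Function.IsPeriodicPt.minimalPeriod_dvd (iterate_shift_cycle hne)
  refine ⟨D, k, Nat.pos_of_ne_zero (by rintro rfl; omega), ?_⟩
  rw [root_pow_eq, mul_comm, ← hk, hsegment _ le_rfl, List.take_of_length_le (by simp),
    List.reverse_reverse]

lemma exists_isConj_mk_isCyclicallyReduced {R : FreeGroup X} (hR : R ≠ 1) :
    ∃ w ≠ [], FreeGroup.IsCyclicallyReduced w ∧ IsConj R (FreeGroup.mk w) := by
  classical
  have hmk := congrArg FreeGroup.mk
    (FreeGroup.reduceCyclically.conj_conjugator_reduceCyclically R.toWord)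
  rw [← FreeGroup.mul_mk, ← FreeGroup.mul_mk, ← FreeGroup.inv_mk, FreeGroup.mk_toWord] at hmk
  have hconj : IsConj R (FreeGroup.mk (FreeGroup.reduceCyclically R.toWord)) :=
    (isConj_iff.2 ⟨_, hmk⟩).symm
  refine ⟨_, fun hnil => hR ?_, FreeGroup.reduceCyclically.isCyclicallyReduced
    FreeGroup.isReduced_toWord, hconj⟩
  rw [hnil] at hconj
  exact isConj_one_right.1 hconj.symm

theorem exists_isConj_root_pow [LinearOrder (FreeGroup X)] {R : FreeGroup X} (hR : R ≠ 1) :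
    ∃ D : CyclicWord X, (∀ t, D.conjRoot 0 ≤ D.conjRoot t) ∧
      ∃ k, 0 < k ∧ IsConj R (D.root ^ k) := by
  obtain ⟨w, hne, hw, hRw⟩ := exists_isConj_mk_isCyclicallyReduced hR
  obtain ⟨D, k, hk, hwD⟩ := exists_mk_eq_root_pow hw hne
  obtain ⟨a, -, hmin⟩ := Finset.exists_min_image (Finset.range D.length) D.conjRoot
    ⟨0, Finset.mem_range.2 D.length_pos⟩
  refine ⟨D.rotate a, fun t => ?_, k, hk, (hwD ▸ hRw).trans ?_⟩
  · rw [conjRoot_rotate, conjRoot_rotate, add_zero, ← conjRoot_mod D (a + t)]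
    exact hmin _ (Finset.mem_range.2 (Nat.mod_lt _ D.length_pos))
  · rw [← conjRoot_zero (D.rotate a), conjRoot_rotate, add_zero, conjRoot, conj_pow]
    exact isConj_iff.2 ⟨_, rfl⟩

end Existence

end CyclicWord

/-! ### Cells and collapses -/

universe u

namespace CyclicWord

section Edge

variable {X Ω : Type*} [MulAction (FreeGroup X) Ω] (D : CyclicWord X)

/-- The edge of the Schreier graph crossed by the letter of index `t` of the path which starts at
`v` and reads a power of `D.root`. -/
def edge (v : Ω) (t : ℕ) : Ω × X := letterEdge (D.letter t) (D.suffix t • v)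

lemma edge_eq (v : Ω) (t : ℕ) : D.edge v t = (D.suffix (D.sourceIdx t) • v, (D.letter t).1) := by
  rw [edge, letterEdge, sourceIdx]
  split_ifs
  · rfl
  · rw [suffix_succ, mul_smul]

lemma edge_add_mul_length (v : Ω) (t k : ℕ) :
    D.edge v (t + k * D.length) = D.edge (D.root ^ k • v) t := by
  rw [edge, edge, suffix_add_mul_length, mul_smul]
  exact congrArg (letterEdge · _) (D.letter_periodic.nat_mul k t)

lemma edge_eq_mod (v : Ω) (t : ℕ) :
    D.edge v t = D.edge (D.root ^ (t / D.length) • v) (t % D.length) := by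
  rw [← edge_add_mul_length, mul_comm, Nat.mod_add_div]

lemma mem_pathEdges_segment {v : Ω} {a k : ℕ} {e : Ω × X} :
    e ∈ pathEdges (D.segment a k) (D.suffix a • v) ↔ ∃ j < k, D.edge v (a + j) = e := by
  induction k with
  | zero => simp [segment, pathEdges]
  | succ k ih =>
    rw [segment, pathEdges, List.mem_cons, ih, smul_smul, mk_segment_mul_suffix, ← edge,
      Nat.exists_lt_succ_right, or_comm, eq_comm]

lemma mem_pathEdges_root_pow {v : Ω} {k : ℕ} {e : Ω × X} :
    e ∈ pathEdges (D.segment 0 (k * D.length)) v ↔ ∃ t < k * D.length, D.edge v t = e := by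
  simpa only [suffix_zero, one_smul, zero_add] using D.mem_pathEdges_segment (v := v) (a := 0)

lemma segment_add (a k l : ℕ) : D.segment a (k + l) = D.segment (a + k) l ++ D.segment a k := by
  induction l with
  | zero => rfl
  | succ l ih => rw [← add_assoc, segment, ih, segment, add_assoc, List.cons_append]

end Edge

section Cells

variable {X Ω : Type u} [MulAction (FreeGroup X) Ω] (D : CyclicWord X) (n : ℕ)

/-- The base points of the closed paths reading `D.root ^ n` all of whose edges lie in `E`. These
are the 2-cells of the full subcomplex on the edge set `E` of the Schreier complex, where the
points of an orbit of `D.root` are the base points of the same cell. -/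
def cells (E : Set (Ω × X)) : Set Ω := {v | D.root ^ n • v = v ∧ ∀ t, D.edge v t ∈ E}

/-- A cochain is flat on a set of base points if it has trivial holonomy along the boundaries
of the corresponding 2-cells. -/
def FlatOn {K : Type*} [Group K] (B : Set Ω) (φ : Ω × X → K) : Prop :=
  ∀ v ∈ B, holonomy φ (D.root ^ n) v = 1

/-- Every cochain which is flat on the cells of the subcomplex with edge set `E` agrees on `E` with
one which is flat on `B`. This is all that is used of a collapse onto `E`. -/
def FlatExtends (B : Set Ω) (E : Set (Ω × X)) : Prop :=
  ∀ (K : Type u) [Group K] (φ : Ω × X → K), D.FlatOn n (D.cells n E) φ →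
    ∃ φ' : Ω × X → K, Set.EqOn φ' φ E ∧ D.FlatOn n B φ'

/-- The edge of index `i` of the cell based at `v` is passed only once by the cells of `E`. -/
def IsFreeFace (E : Set (Ω × X)) (v : Ω) (i : ℕ) : Prop :=
  ∀ v' ∈ D.cells n E, ∀ i' < D.length, D.edge v' i' = D.edge v i → v' = v ∧ i' = i

variable {D n} {E : Set (Ω × X)} {v : Ω}

lemma root_pow_smul_mem_cells (h : v ∈ D.cells n E) (k : ℕ) : D.root ^ k • v ∈ D.cells n E := by
  refine ⟨?_, fun t => ?_⟩
  · rw [smul_smul, ← pow_add, add_comm, pow_add, mul_smul, h.1]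
  · rw [← edge_add_mul_length]
    exact h.2 _

lemma holonomy_root_pow_eq_one_of_smul {K : Type*} [Group K] {φ : Ω × X → K} (k : ℕ)
    (h : D.root ^ n • v = v) (hφ : holonomy φ (D.root ^ n) (D.root ^ k • v) = 1) :
    holonomy φ (D.root ^ n) v = 1 := by
  have hcomm : holonomy φ (D.root ^ n * D.root ^ k) v = holonomy φ (D.root ^ k * D.root ^ n) v := by
    rw [← pow_add, ← pow_add, add_comm]
  rw [holonomy_mul, holonomy_mul, hφ, h, one_mul] at hcomm
  exact mul_eq_left.1 hcomm.symm

lemma IsFreeFace.root_pow_smul_eq {i t : ℕ} (hi : D.IsFreeFace n E v i) {v' : Ω}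
    (hv' : v' ∈ D.cells n E) (h : D.edge v' t = D.edge v i) :
    D.root ^ (t / D.length) • v' = v ∧ t % D.length = i := by
  rw [edge_eq_mod] at h
  exact hi _ (root_pow_smul_mem_cells hv' _) _ (Nat.mod_lt _ D.length_pos) h

lemma IsFreeFace.index_eq {i t : ℕ} (hi : D.IsFreeFace n E v i) (hv : v ∈ D.cells n E)
    (ht : t < MulAction.period D.root v * D.length) (h : D.edge v t = D.edge v i) : t = i := by
  obtain ⟨hsmul, hmod⟩ := hi.root_pow_smul_eq hv h
  have hdiv : t / D.length = 0 :=
    Nat.eq_zero_of_dvd_of_lt (MulAction.pow_smul_eq_iff_period_dvd.1 hsmul)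
      (Nat.div_lt_of_lt_mul (by rwa [mul_comm]))
  rw [← hmod, Nat.mod_eq_of_lt ((Nat.div_eq_zero_iff_lt D.length_pos).1 hdiv)]

lemma IsFreeFace.exists_update_holonomy_eq_one [DecidableEq (Ω × X)] {K : Type*} [Group K]
    (hn : 0 < n) {i : ℕ} (hi : D.IsFreeFace n E v i) (hv : v ∈ D.cells n E) (hlt : i < D.length)
    (φ : Ω × X → K) :
    ∃ c : K, holonomy (Function.update φ (D.edge v i) c) (D.root ^ n) v = 1 := by
  obtain ⟨m, hm⟩ := MulAction.pow_smul_eq_iff_period_dvd.1 hv.1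
  set d := MulAction.period D.root v
  have hindex {t : ℕ} (ht : t < d * D.length) : D.edge v t = D.edge v i → t = i :=
    hi.index_eq hv ht
  have hd : 0 < d := Nat.pos_of_mul_pos_right (hm ▸ hn)
  have hid : i + 1 ≤ d * D.length := hlt.trans_le (Nat.le_mul_of_pos_left _ hd)
  obtain ⟨l, hl⟩ := Nat.exists_eq_add_of_le hid
  have hsegment : D.segment 0 (d * D.length) =
      D.segment (i + 1) l ++ D.letter i :: D.segment 0 i := by
    rw [hl, segment_add, segment, zero_add, zero_add]
  have hafter : D.edge v i ∉
      pathEdges (D.segment (i + 1) l) (FreeGroup.mk (D.letter i :: D.segment 0 i) • v) := by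
    rw [freeGroup_mk_cons, ← suffix, ← suffix_succ, mem_pathEdges_segment]
    rintro ⟨j, hj, h⟩
    have := hindex (by omega) h
    omega
  have hbefore : D.edge v i ∉ pathEdges (D.segment 0 i) v := by
    rw [← one_smul (FreeGroup X) v, ← D.suffix_zero, mem_pathEdges_segment, D.suffix_zero, one_smul]
    rintro ⟨j, hj, h⟩
    have := hindex (by omega) h
    omega
  obtain ⟨c, hc⟩ := _root_.exists_update_holonomy_eq_one φ rfl hafter hbefore
  refine ⟨c, ?_⟩
  rw [hm, pow_mul, holonomy_pow (MulAction.pow_period_smul D.root v), root_pow_eq, hsegment]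
  exact (congrArg (· ^ m) hc).trans (one_pow m)

theorem FlatExtends.collapse (hn : 0 < n) {B : Set Ω} (hE : D.FlatExtends n B E) {i : ℕ}
    (hi : D.IsFreeFace n E v i) (hv : v ∈ D.cells n E) (hlt : i < D.length) :
    D.FlatExtends n B (E \ {D.edge v i}) := by
  classical
  intro K _ φ hφ
  obtain ⟨c, hc⟩ := hi.exists_update_holonomy_eq_one hn hv hlt φ
  have hupdate {e : Ω × X} (he : e ≠ D.edge v i) :
      Function.update φ (D.edge v i) c e = φ e := Function.update_of_ne he _ _
  obtain ⟨φ', hφ', hflat⟩ := hE K (Function.update φ (D.edge v i) c) fun v' hv' => by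
    by_cases hex : ∃ t, D.edge v' t = D.edge v i
    · obtain ⟨t, ht⟩ := hex
      refine holonomy_root_pow_eq_one_of_smul (t / D.length) hv'.1 ?_
      rw [(hi.root_pow_smul_eq hv' ht).1, hc]
    · rw [not_exists] at hex
      rw [← hφ v' ⟨hv'.1, fun t => ⟨hv'.2 t, hex t⟩⟩, root_pow_eq]
      refine holonomy_congr fun e he => ?_
      obtain ⟨t, -, rfl⟩ := D.mem_pathEdges_root_pow.1 he
      exact hupdate (hex t)
  exact ⟨φ', fun e he => (hφ' he.1).trans (hupdate he.2), hflat⟩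

lemma flatExtends_of_edge_mem (hn : 0 < n) {B : Set Ω} (hB : ∀ v ∈ B, D.root ^ n • v = v)
    (hE : ∀ v ∈ B, ∀ t < n * D.length, D.edge v t ∈ E) : D.FlatExtends n B E := by
  refine fun K _ φ hφ => ⟨φ, fun _ _ => rfl, fun v hv => hφ v ⟨hB v hv, fun t => ?_⟩⟩
  have hedge : D.edge v t = D.edge v (t % (n * D.length)) := by
    have hfix (k : ℕ) : D.root ^ (n * k) • v = v := MulAction.pow_smul_eq_iff_period_dvd.2
      ((MulAction.pow_smul_eq_iff_period_dvd.1 (hB v hv)).mul_right k)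
    conv_lhs => rw [← Nat.mod_add_div t (n * D.length), mul_right_comm, edge_add_mul_length, hfix]
  rw [hedge]
  exact hE v hv _ (Nat.mod_lt _ (Nat.mul_pos hn D.length_pos))

theorem exists_collapsed (hn : 0 < n) {B : Set Ω} (hfin : B.Finite)
    (hB : ∀ v ∈ B, D.root ^ n • v = v) (E₀ : Finset (Ω × X)) :
    ∃ E : Finset (Ω × X), E₀ ⊆ E ∧ D.FlatExtends n B (E : Set (Ω × X)) ∧
      ∀ v ∈ D.cells n (E : Set (Ω × X)), ∀ i < D.length, D.IsFreeFace n (E : Set (Ω × X)) v i →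
        D.edge v i ∈ E₀ := by
  classical
  obtain ⟨E, -, hE⟩ := exists_minimal_le_of_wellFoundedLT
    (fun E : Finset (Ω × X) => E₀ ⊆ E ∧ D.FlatExtends n B (E : Set (Ω × X)))
    (E₀ ∪ (hfin.toFinset ×ˢ Finset.range (n * D.length)).image fun a => D.edge a.1 a.2)
    ⟨Finset.subset_union_left, flatExtends_of_edge_mem hn hB fun v hv t ht =>
      Finset.mem_coe.2 <| Finset.mem_union_right _ <| Finset.mem_image.2
        ⟨(v, t), Finset.mem_product.2 ⟨hfin.mem_toFinset.2 hv, Finset.mem_range.2 ht⟩, rfl⟩⟩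
  refine ⟨E, hE.prop.1, hE.prop.2, fun v hv i hi hfree => by_contra fun hmem => ?_⟩
  have hext : D.FlatExtends n B (E.erase (D.edge v i) : Set (Ω × X)) := by
    rw [Finset.coe_erase]
    exact hE.prop.2.collapse hn hfree hv hi
  have hle := hE.le_of_le
    ⟨Finset.subset_erase.2 ⟨hE.prop.1, hmem⟩, hext⟩ (Finset.erase_subset _ _)
  exact Finset.notMem_erase _ _ (hle (Finset.mem_coe.1 (hv.2 i)))

end Cells

end CyclicWord

/-! ### Counting passages with an order -/

namespace CyclicWord

section Modular

variable {X : Type*} (D : CyclicWord X) {a b : ℕ}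

lemma letter_eq_of_modEq (h : a ≡ b [MOD D.length]) : D.letter a = D.letter b := by
  rw [← D.letter_periodic.map_mod_nat a, h, D.letter_periodic.map_mod_nat]

lemma modEq_of_conjRoot_eq (h : D.conjRoot a = D.conjRoot b) : a ≡ b [MOD D.length] :=
  D.conjRoot_injOn (Nat.mod_lt _ D.length_pos) (Nat.mod_lt _ D.length_pos)
    (by rw [conjRoot_mod, conjRoot_mod, h])

lemma modEq_of_sourceIdx_modEq (hletter : (D.letter a).1 = (D.letter b).1)
    (h : D.sourceIdx a ≡ D.sourceIdx b [MOD D.length]) : a ≡ b [MOD D.length] := by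
  rw [sourceIdx, sourceIdx] at h
  split_ifs at h with ha hb hb
  · exact h
  · refine absurd ?_ (D.reduced b)
    rw [← D.letter_eq_of_modEq h]
    exact Prod.ext hletter (by rw [ha, Bool.eq_false_of_not_eq_true hb]; rfl)
  · refine absurd ?_ (D.reduced a)
    rw [D.letter_eq_of_modEq h]
    exact Prod.ext hletter.symm (by rw [hb, Bool.eq_false_of_not_eq_true ha]; rfl)
  · exact Nat.ModEq.add_right_cancel' 1 h

end Modular

section OrderCount

variable {X Ω : Type*} [MulAction (FreeGroup X) Ω] (D : CyclicWord X) (P : Finset Ω)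

open scoped Classical in
/-- The vertices on the boundaries of the cells based at the points of `P`. -/
noncomputable def cellVertices : Finset Ω :=
  (P ×ˢ Finset.range D.length).image fun a => D.suffix a.2 • a.1

open scoped Classical in
/-- The edges on the boundaries of the cells based at the points of `P`. -/
noncomputable def cellEdges : Finset (Ω × X) :=
  (P ×ˢ Finset.range D.length).image fun a => D.edge a.1 a.2

variable {D P}

lemma suffix_smul_mem_cellVertices (hP : ∀ v ∈ P, ∀ k : ℕ, D.root ^ k • v ∈ P) {v : Ω}
    (hv : v ∈ P) (t : ℕ) : D.suffix t • v ∈ D.cellVertices P := by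
  classical
  refine Finset.mem_image.2 ⟨(D.root ^ (t / D.length) • v, t % D.length),
    Finset.mem_product.2 ⟨hP v hv _, Finset.mem_range.2 (Nat.mod_lt _ D.length_pos)⟩, ?_⟩
  rw [suffix_eq_mod D t, mul_smul]

lemma fst_letter_eq {v v' : Ω} {t t' : ℕ} (h : D.edge v' t' = D.edge v t) :
    (D.letter t').1 = (D.letter t).1 := by
  rw [edge_eq, edge_eq] at h
  exact congrArg Prod.snd h

lemma suffix_sourceIdx_smul_eq {v v' : Ω} {t t' : ℕ} (h : D.edge v' t' = D.edge v t) :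
    D.suffix (D.sourceIdx t') • v' = D.suffix (D.sourceIdx t) • v := by
  rw [edge_eq, edge_eq] at h
  exact congrArg Prod.fst h

lemma suffix_targetIdx_smul_eq {v v' : Ω} {t t' : ℕ} (h : D.edge v' t' = D.edge v t) :
    D.suffix (D.targetIdx t') • v' = D.suffix (D.targetIdx t) • v := by
  rw [suffix_targetIdx, suffix_targetIdx, mul_smul, mul_smul, suffix_sourceIdx_smul_eq h,
    fst_letter_eq h]

lemma eq_of_edge_eq_of_conjRoot_eq {v v' : Ω} {t t' : ℕ} (ht : t < D.length) (ht' : t' < D.length)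
    (he : D.edge v' t' = D.edge v t)
    (hr : D.conjRoot (D.sourceIdx t') = D.conjRoot (D.sourceIdx t)) : v' = v ∧ t' = t := by
  obtain rfl : t' = t := (D.modEq_of_sourceIdx_modEq (fst_letter_eq he)
    (D.modEq_of_conjRoot_eq hr)).eq_of_lt_of_lt ht' ht
  exact ⟨MulAction.injective _ (suffix_sourceIdx_smul_eq he), rfl⟩

variable [LinearOrder (FreeGroup X)]

variable (D P) in
/-- Among the passages of the cells in `P` through the vertex of index `t` of the cell based at `v`,
the one of index `t` carries the largest cyclic conjugate of the root. -/
def IsTopAtVertex (v : Ω) (t : ℕ) : Prop :=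
  ∀ v' ∈ P, ∀ t', D.suffix t' • v' = D.suffix t • v → D.conjRoot t' ≤ D.conjRoot t

variable (D P) in
/-- Among the passages of the cells in `P` through the edge of index `t` of the cell based at `v`,
the one of index `t` carries the largest cyclic conjugate of the root. -/
def IsTopAtEdge (v : Ω) (t : ℕ) : Prop :=
  ∀ v' ∈ P, ∀ t', D.edge v' t' = D.edge v t →
    D.conjRoot (D.sourceIdx t') ≤ D.conjRoot (D.sourceIdx t)

open scoped Classical in
variable (D P) in
/-- The passages which are maximal at their vertex. -/
noncomputable def topAtVertex : Finset (Ω × ℕ) :=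
  (P ×ˢ Finset.range D.length).filter fun a => D.IsTopAtVertex P a.1 a.2

open scoped Classical in
variable (D P) in
/-- The passages which are maximal at their edge. -/
noncomputable def topAtEdge : Finset (Ω × ℕ) :=
  (P ×ˢ Finset.range D.length).filter fun a => D.IsTopAtEdge P a.1 a.2

lemma mem_topAtVertex {v : Ω} {t : ℕ} :
    (v, t) ∈ D.topAtVertex P ↔ (v ∈ P ∧ t < D.length) ∧ D.IsTopAtVertex P v t := by
  simp only [topAtVertex, Finset.mem_filter, Finset.mem_product, Finset.mem_range]

lemma mem_topAtEdge {v : Ω} {t : ℕ} :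
    (v, t) ∈ D.topAtEdge P ↔ (v ∈ P ∧ t < D.length) ∧ D.IsTopAtEdge P v t := by
  simp only [topAtEdge, Finset.mem_filter, Finset.mem_product, Finset.mem_range]

lemma card_cellVertices_le (hP : ∀ v ∈ P, ∀ k : ℕ, D.root ^ k • v ∈ P) :
    (D.cellVertices P).card ≤ (D.topAtVertex P).card := by
  classical
  refine (Finset.card_le_card fun u hu => ?_).trans
    (Finset.card_image_le (s := D.topAtVertex P) (f := fun a => D.suffix a.2 • a.1))
  obtain ⟨a, ha, hau⟩ := Finset.mem_image.1 hu
  obtain ⟨b, hb, hmax⟩ := Finset.exists_max_image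
    ((P ×ˢ Finset.range D.length).filter fun a => D.suffix a.2 • a.1 = u)
    (fun a => D.conjRoot a.2) ⟨a, Finset.mem_filter.2 ⟨ha, hau⟩⟩
  obtain ⟨hb, hbu⟩ := Finset.mem_filter.1 hb
  refine Finset.mem_image.2 ⟨b, Finset.mem_filter.2 ⟨hb, fun v hv t h => ?_⟩, hbu⟩
  rw [hbu, suffix_eq_mod, mul_smul] at h
  rw [← D.conjRoot_mod t]
  exact hmax (D.root ^ (t / D.length) • v, t % D.length) <| Finset.mem_filter.2
    ⟨Finset.mem_product.2 ⟨hP v hv _, Finset.mem_range.2 (Nat.mod_lt _ D.length_pos)⟩, h⟩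

lemma card_topAtEdge_le : (D.topAtEdge P).card ≤ (D.cellEdges P).card := by
  classical
  refine Finset.card_le_card_of_injOn (fun a => D.edge a.1 a.2)
    (fun a ha => Finset.mem_image_of_mem _ (Finset.mem_filter.1 ha).1) fun a ha b hb hab => ?_
  obtain ⟨⟨haP, ha⟩, hatop⟩ := mem_topAtEdge.1 ha
  obtain ⟨⟨hbP, hb⟩, hbtop⟩ := mem_topAtEdge.1 hb
  exact Prod.ext_iff.2 <| eq_of_edge_eq_of_conjRoot_eq hb ha hab <|
    le_antisymm (hbtop _ haP _ hab) (hatop _ hbP _ hab.symm)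

lemma IsTopAtVertex.isTopAtEdge_of_sourceIdx {v : Ω} {t : ℕ}
    (h : D.IsTopAtVertex P v (D.sourceIdx t)) : D.IsTopAtEdge P v t :=
  fun v' hv' _ he => h v' hv' _ (suffix_sourceIdx_smul_eq he)

lemma exists_isTopAtVertex (D : CyclicWord X) :
    ∃ t < D.length, ∀ v : Ω, D.IsTopAtVertex P v t := by
  obtain ⟨t, ht, htop⟩ := Finset.exists_max_image (Finset.range D.length) D.conjRoot
    ⟨0, Finset.mem_range.2 D.length_pos⟩
  refine ⟨t, Finset.mem_range.1 ht, fun v v' _ t' _ => ?_⟩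
  rw [← D.conjRoot_mod t']
  exact htop _ (Finset.mem_range.2 (Nat.mod_lt _ D.length_pos))

variable [MulLeftMono (FreeGroup X)] [MulRightMono (FreeGroup X)]

lemma conjRoot_targetIdx_le_iff {v v' : Ω} {t t' : ℕ} (h : D.edge v' t' = D.edge v t) :
    D.conjRoot (D.targetIdx t') ≤ D.conjRoot (D.targetIdx t) ↔
      D.conjRoot (D.sourceIdx t') ≤ D.conjRoot (D.sourceIdx t) := by
  rw [conjRoot_targetIdx, conjRoot_targetIdx, fst_letter_eq h, mul_le_mul_iff_right,
    mul_le_mul_iff_left]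

lemma IsTopAtVertex.isTopAtEdge_of_targetIdx {v : Ω} {t : ℕ}
    (h : D.IsTopAtVertex P v (D.targetIdx t)) : D.IsTopAtEdge P v t :=
  fun v' hv' _ he =>
    (conjRoot_targetIdx_le_iff he).1 (h v' hv' _ (suffix_targetIdx_smul_eq he))

lemma IsTopAtVertex.isTopAtEdge {v : Ω} {t : ℕ} (h : D.IsTopAtVertex P v t) :
    D.IsTopAtEdge P v t := by
  cases hb : (D.letter t).2
  · exact isTopAtEdge_of_targetIdx (by rwa [targetIdx, hb])
  · exact isTopAtEdge_of_sourceIdx (by rwa [sourceIdx, hb])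

lemma IsTopAtVertex.isTopAtEdge_of_succ {v : Ω} {t : ℕ} (h : D.IsTopAtVertex P v (t + 1)) :
    D.IsTopAtEdge P v t := by
  cases hb : (D.letter t).2
  · exact isTopAtEdge_of_sourceIdx (by rwa [sourceIdx, hb])
  · exact isTopAtEdge_of_targetIdx (by rwa [targetIdx, hb])

lemma IsTopAtEdge.eq_of_edge_eq (hmin : ∀ t, D.conjRoot 0 ≤ D.conjRoot t) {v v' : Ω} {t' : ℕ}
    (h : D.IsTopAtEdge P v 0) (hv' : v' ∈ P) (ht' : t' < D.length)
    (he : D.edge v' t' = D.edge v 0) : v' = v ∧ t' = 0 := by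
  refine eq_of_edge_eq_of_conjRoot_eq D.length_pos ht' he (le_antisymm (h v' hv' t' he) ?_)
  cases hb : (D.letter 0).2
  · rw [← conjRoot_targetIdx_le_iff he.symm, targetIdx, hb]
    exact hmin _
  · rw [sourceIdx, hb]
    exact hmin _

open scoped Classical in
/-- The first index at which a cell is top at its edge, if nonzero, is not top at its vertex, as
otherwise the cell would be top at the preceding edge. -/
lemma card_not_isTopAtEdge_zero_le :
    (P.filter fun v => ¬ D.IsTopAtEdge P v 0).card ≤ (D.topAtEdge P \ D.topAtVertex P).card := by
  obtain ⟨t, ht, htop⟩ := D.exists_isTopAtVertex (P := P)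
  have hex (v : Ω) : ∃ t, D.IsTopAtEdge P v t := ⟨t, (htop v).isTopAtEdge⟩
  refine Finset.card_le_card_of_injOn (fun v => (v, Nat.find (hex v))) (fun v hv => ?_)
    fun v _ w _ h => congrArg Prod.fst h
  obtain ⟨hvP, hv⟩ := Finset.mem_filter.1 hv
  have hlt : Nat.find (hex v) < D.length := (Nat.find_min' (hex v) (htop v).isTopAtEdge).trans_lt ht
  refine Finset.mem_sdiff.2 ⟨mem_topAtEdge.2 ⟨⟨hvP, hlt⟩, Nat.find_spec (hex v)⟩, fun hmem => ?_⟩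
  obtain ⟨-, hvertex⟩ := mem_topAtVertex.1 hmem
  obtain ⟨s, hs⟩ := Nat.exists_eq_succ_of_ne_zero
    fun h0 : Nat.find (hex v) = 0 => hv (h0 ▸ Nat.find_spec (hex v))
  rw [hs] at hvertex
  exact Nat.find_min (hex v) (hs ▸ Nat.lt_succ_self s) hvertex.isTopAtEdge_of_succ

open scoped Classical in
theorem card_cellVertices_add_card_le (hP : ∀ v ∈ P, ∀ k : ℕ, D.root ^ k • v ∈ P) :
    (D.cellVertices P).card + (P.filter fun v => ¬ D.IsTopAtEdge P v 0).card ≤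
      (D.cellEdges P).card := by
  have hsub : D.topAtVertex P ⊆ D.topAtEdge P :=
    Finset.monotone_filter_right _ fun _ _ h => h.isTopAtEdge
  calc (D.cellVertices P).card + (P.filter fun v => ¬ D.IsTopAtEdge P v 0).card
      ≤ (D.topAtVertex P).card + (D.topAtEdge P \ D.topAtVertex P).card :=
        add_le_add (card_cellVertices_le hP) card_not_isTopAtEdge_zero_le
    _ = (D.topAtEdge P).card := by rw [add_comm, Finset.card_sdiff_add_card_eq_card hsub]
    _ ≤ (D.cellEdges P).card := card_topAtEdge_le

end OrderCount

end CyclicWord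

/-! ### The number of cells -/

section Counting

lemma card_le_card_mul_card_of_ker_subset_range {M N V : Type*} [Group M] [Group N] [Finite M]
    [Finite N] [Finite V] (Ψ : M →* N) (δ : V → M) (h : ∀ m, Ψ m = 1 → m ∈ Set.range δ) :
    Nat.card M ≤ Nat.card V * Nat.card N := by
  choose f hf using h
  have hker : Nat.card Ψ.ker ≤ Nat.card V :=
    Nat.card_le_card_of_injective (fun m : Ψ.ker => f m m.2) fun a b hab => Subtype.ext <| by
      rw [← hf a a.2, ← hf b b.2]
      exact congrArg δ hab
  rw [← Ψ.ker.card_mul_index, Subgroup.index_ker]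
  exact Nat.mul_le_mul hker (Nat.card_le_card_of_injective _ Subtype.val_injective)

lemma exists_finset_meeting_moved_orbits {α : Type*} {f : α → α} (hf : Function.Injective f)
    {P : Finset α} (hP : ∀ v ∈ P, f v ∈ P) :
    ∃ Q : Finset α, 2 * Q.card ≤ P.card ∧ ∀ v ∈ P, f v ≠ v → ∃ k, f^[k] v ∈ Q := by
  classical
  obtain ⟨Q, hQP, hQ⟩ := exists_minimal_le_of_wellFoundedLT
    (fun Q : Finset α => (∀ v ∈ Q, f v ≠ v) ∧ ∀ v ∈ P, f v ≠ v → ∃ k, f^[k] v ∈ Q)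
    (P.filter fun v => f v ≠ v) ⟨fun v hv => (Finset.mem_filter.1 hv).2,
      fun v hv h => ⟨0, Finset.mem_filter.2 ⟨hv, h⟩⟩⟩
  replace hQP : Q ⊆ P := hQP.trans (Finset.filter_subset _ _)
  have hdisjoint : Disjoint Q (Q.image f) := by
    refine Finset.disjoint_right.2 fun w hw hwQ => ?_
    obtain ⟨v, hv, rfl⟩ := Finset.mem_image.1 hw
    refine Finset.notMem_erase v Q (hQ.le_of_le
      ⟨fun w hw => hQ.prop.1 w (Finset.mem_of_mem_erase hw),
      fun w hw hmoved => ?_⟩ (Finset.erase_subset v Q) hv)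
    obtain ⟨k, hk⟩ := hQ.prop.2 w hw hmoved
    by_cases hkv : f^[k] w = v
    · refine ⟨k + 1, ?_⟩
      rw [Function.iterate_succ_apply', hkv]
      exact Finset.mem_erase.2 ⟨hQ.prop.1 v hv, hwQ⟩
    · exact ⟨k, Finset.mem_erase.2 ⟨hkv, hk⟩⟩
  refine ⟨Q, ?_, hQ.prop.2⟩
  calc 2 * Q.card = (Q ∪ Q.image f).card := by
        rw [Finset.card_union_of_disjoint hdisjoint, Finset.card_image_of_injective _ hf, two_mul]
    _ ≤ P.card := Finset.card_le_card <| Finset.union_subset hQP <|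
        Finset.image_subset_iff.2 fun v hv => hP v (hQP hv)

/-- A cochain on `E` is determined up to a coboundary by its holonomies along the `|Q| + 1` given
loops, so there are at most `|A| ^ (|V| + |Q| + 1)` cochains on `E`. -/
lemma card_edges_le {X Ω A : Type*} [MulAction (FreeGroup X) Ω] [CommGroup A] [Finite A]
    [Nontrivial A] {E : Finset (Ω × X)} {V Q : Finset Ω}
    (hV : ∀ e ∈ E, e.1 ∈ V ∧ FreeGroup.of e.2 • e.1 ∈ V) {h r : FreeGroup X} {p : Ω}
    (hker : ∀ φ : Ω × X → A, holonomy φ h p = 1 → (∀ v ∈ Q, holonomy φ r v = 1) →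
      ∃ f : Ω → A, ∀ e ∈ E, φ e = f (FreeGroup.of e.2 • e.1) * (f e.1)⁻¹) :
    E.card ≤ V.card + Q.card + 1 := by
  let hol (w : FreeGroup X) (ω : Ω) : (Ω × X → A) →* A :=
    MonoidHom.mk' (fun φ => holonomy φ w ω) fun φ ψ => holonomy_mul_cochain φ ψ w ω
  let Ψ : (E → A) →* A × (Q → A) :=
    ((hol h p).prod (MonoidHom.pi fun v : Q => hol r v)).comp
      (Function.ExtendByOne.hom A Subtype.val)
  let δ (f : V → A) (e : E) : A := f ⟨_, (hV e e.2).2⟩ * (f ⟨_, (hV e e.2).1⟩)⁻¹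
  have hcard := card_le_card_mul_card_of_ker_subset_range Ψ δ fun φ hφ => by
    obtain ⟨f, hf⟩ := hker (Function.ExtendByOne.hom A Subtype.val φ) (congrArg Prod.fst hφ)
      fun v hv => congrFun (congrArg Prod.snd hφ) ⟨v, hv⟩
    refine ⟨fun v => f v, funext fun e => ?_⟩
    rw [← Subtype.val_injective.extend_apply φ 1 e]
    exact (hf e e.2).symm
  simp only [Nat.card_fun, Nat.card_prod, Nat.card_eq_fintype_card (α := E), Fintype.card_coe,
    Nat.card_eq_fintype_card (α := V), Nat.card_eq_fintype_card (α := Q)] at hcard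
  refine (Nat.pow_le_pow_iff_right (Finite.one_lt_card (α := A))).1 (hcard.trans_eq ?_)
  ring

end Counting

namespace CyclicWord

section Stabilizer

variable {X Ω : Type u} [MulAction (FreeGroup X) Ω] (D : CyclicWord X) (n : ℕ)

/-- The conjugates of the relator `D.root ^ n` by the elements of `U`. -/
def conjRelators (U : Set (FreeGroup X)) : Set (FreeGroup X) :=
  (fun u => u * D.root ^ n * u⁻¹) '' U

variable {D n} {U : Set (FreeGroup X)} {p : Ω}

lemma root_pow_smul_of_conjRelators
    (h : D.conjRelators n U ⊆ MulAction.stabilizer (FreeGroup X) p) :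
    ∀ v ∈ (fun u => u⁻¹ • p) '' U, D.root ^ n • v = v := by
  rintro _ ⟨u, hu, rfl⟩
  have : (u * D.root ^ n * u⁻¹) • p = p := h ⟨u, hu, rfl⟩
  rwa [mul_smul, mul_smul, ← eq_inv_smul_iff] at this

lemma closure_conjRelators_le_flatStabilizer
    (h : D.conjRelators n U ⊆ MulAction.stabilizer (FreeGroup X) p)
    {K : Type*} [Group K] {φ : Ω × X → K} (hφ : D.FlatOn n ((fun u => u⁻¹ • p) '' U) φ) :
    Subgroup.closure (D.conjRelators n U) ≤ flatStabilizer φ p := by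
  rw [Subgroup.closure_le]
  rintro _ ⟨u, hu, rfl⟩
  exact ⟨h ⟨u, hu, rfl⟩, holonomy_conj_eq_one
    (root_pow_smul_of_conjRelators h _ ⟨u, hu, rfl⟩) (hφ _ ⟨u, hu, rfl⟩)⟩

lemma cellEdges_subset {E : Set (Ω × X)} {P : Finset Ω} (hP : ∀ v ∈ P, v ∈ D.cells n E) :
    (D.cellEdges P : Set (Ω × X)) ⊆ E := fun e he => by
  classical
  obtain ⟨a, ha, rfl⟩ := Finset.mem_image.1 (Finset.mem_coe.1 he)
  exact (hP _ (Finset.mem_product.1 ha).1).2 _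

variable {l : List (X × Bool)}
  (hst : MulAction.stabilizer (FreeGroup X) p =
    Subgroup.closure (insert (FreeGroup.mk l) (D.conjRelators n U)))
include hst

lemma conjRelators_subset_stabilizer :
    D.conjRelators n U ⊆ MulAction.stabilizer (FreeGroup X) p := by
  rw [hst]
  exact (Set.subset_insert _ _).trans Subgroup.subset_closure

lemma mk_smul_eq_of_stabilizer_eq : FreeGroup.mk l • p = p :=
  MulAction.mem_stabilizer_iff.1 <| hst ▸ Subgroup.subset_closure (Set.mem_insert _ _)

lemma exists_potential_on [MulAction.IsPretransitive (FreeGroup X) Ω] {E : Set (Ω × X)}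
    (hE : D.FlatExtends n ((fun u => u⁻¹ • p) '' U) E) (hl : ∀ e ∈ pathEdges l p, e ∈ E)
    {K : Type u} [Group K] {φ : Ω × X → K} (hφ : D.FlatOn n (D.cells n E) φ)
    (hφl : holonomy φ (FreeGroup.mk l) p = 1) :
    ∃ f : Ω → K, ∀ e ∈ E, φ e = f (FreeGroup.of e.2 • e.1) * (f e.1)⁻¹ := by
  obtain ⟨φ', heq, hflat⟩ := hE K φ hφ
  obtain ⟨f, hf⟩ := exists_potential (φ := φ') (p := p) <| by
    have hsub := conjRelators_subset_stabilizer hst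
    rw [hst, Subgroup.closure_le, Set.insert_subset_iff, ← Subgroup.closure_le]
    exact ⟨⟨mk_smul_eq_of_stabilizer_eq hst,
      (holonomy_congr fun e he => heq (hl e he)).trans hφl⟩,
      closure_conjRelators_le_flatStabilizer hsub hflat⟩
  exact ⟨f, fun e he => (heq he).symm.trans (hf e.1 e.2)⟩

/-- The cohomology of the Schreier complex with coefficients in `ℤ/n` gives the bound: a cell which
is fixed by the root imposes no condition on such cochains. -/
lemma card_cellEdges_le [MulAction.IsPretransitive (FreeGroup X) Ω] (hn : 1 < n)
    {E : Finset (Ω × X)} (hE : D.FlatExtends n ((fun u => u⁻¹ • p) '' U) (E : Set (Ω × X)))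
    (hl : ∀ e ∈ pathEdges l p, e ∈ E) {P Q : Finset Ω}
    (hP : ∀ v, v ∈ P ↔ v ∈ D.cells n (E : Set (Ω × X)))
    (hQ : ∀ v ∈ P, D.root • v ≠ v → ∃ k : ℕ, D.root ^ k • v ∈ Q) :
    (D.cellEdges P).card ≤ (D.cellVertices P).card + Q.card + 1 := by
  classical
  have : Fact (1 < n) := ⟨hn⟩
  have : NeZero n := ⟨(zero_lt_one.trans hn).ne'⟩
  let A := ULift.{u} (Multiplicative (ZMod n))
  have hpow (a : A) : a ^ n = 1 := ULift.ext _ _ <| by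
    rw [ULift.pow_down]
    exact ZModModule.char_nsmul_eq_zero n a.down.toAdd
  have hcells {v : Ω} (hv : v ∈ P) (k : ℕ) : D.root ^ k • v ∈ P :=
    (hP _).2 (root_pow_smul_mem_cells ((hP v).1 hv) k)
  refine card_edges_le (A := A) (h := FreeGroup.mk l) (r := D.root ^ n) (p := p)
    (fun e he => ?_) fun φ hφl hφQ => ?_
  · obtain ⟨a, ha, rfl⟩ := Finset.mem_image.1 he
    have hmem :=
      suffix_smul_mem_cellVertices (fun v hv k => hcells hv k) (Finset.mem_product.1 ha).1
    rw [edge_eq, ← mul_smul, ← suffix_targetIdx]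
    exact ⟨hmem _, hmem _⟩
  · have hflat : D.FlatOn n (D.cells n (E : Set (Ω × X))) φ := fun v hv => by
      by_cases hfix : D.root • v = v
      · rw [holonomy_pow hfix, hpow]
      · obtain ⟨k, hk⟩ := hQ v ((hP v).2 hv) hfix
        exact holonomy_root_pow_eq_one_of_smul k hv.1 (hφQ _ hk)
    obtain ⟨f, hf⟩ := exists_potential_on hst hE hl hflat hφl
    exact ⟨f, fun e he => hf e (cellEdges_subset (fun v hv => (hP v).1 hv) he)⟩

omit hst in
lemma edge_zero_injective : Function.Injective fun v : Ω => D.edge v 0 := fun v w h => by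
  simp only [edge_eq, Prod.mk.injEq] at h
  exact smul_left_cancel _ h.1

open scoped Classical in
omit hst in
lemma card_isTopAtEdge_zero_le [LinearOrder (FreeGroup X)] [MulLeftMono (FreeGroup X)]
    [MulRightMono (FreeGroup X)]
    (hmin : ∀ t, D.conjRoot 0 ≤ D.conjRoot t) {E : Set (Ω × X)} {E₀ : Finset (Ω × X)}
    (hfree : ∀ v ∈ D.cells n E, ∀ i < D.length, D.IsFreeFace n E v i → D.edge v i ∈ E₀)
    {P : Finset Ω} (hP : ∀ v, v ∈ P ↔ v ∈ D.cells n E) :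
    (P.filter fun v => D.IsTopAtEdge P v 0).card ≤ E₀.card := by
  refine Finset.card_le_card_of_injOn (fun v => D.edge v 0) (fun v hv => ?_)
    edge_zero_injective.injOn
  obtain ⟨hvP, htop⟩ := Finset.mem_filter.1 hv
  exact hfree v ((hP v).1 hvP) 0 D.length_pos fun v' hv' t' ht' he =>
    htop.eq_of_edge_eq hmin ((hP v').2 hv') ht' he

omit hst in
lemma finite_cells (E : Finset (Ω × X)) : (D.cells n (E : Set (Ω × X))).Finite :=
  Set.Finite.of_injOn (fun _ hv => hv.2 0) edge_zero_injective.injOn E.finite_toSet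

/-- A collapsed subcomplex has few cells: the order provides a free face for each cell apart from
those that are counted by the excess of edges over vertices. -/
theorem card_cells_le [MulAction.IsPretransitive (FreeGroup X) Ω] [LinearOrder (FreeGroup X)]
    [MulLeftMono (FreeGroup X)] [MulRightMono (FreeGroup X)]
    (hmin : ∀ t, D.conjRoot 0 ≤ D.conjRoot t) (hn : 1 < n) {E E₀ : Finset (Ω × X)}
    (hE : D.FlatExtends n ((fun u => u⁻¹ • p) '' U) (E : Set (Ω × X)))
    (hl : ∀ e ∈ pathEdges l p, e ∈ E)
    (hfree : ∀ v ∈ D.cells n (E : Set (Ω × X)), ∀ i < D.length,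
      D.IsFreeFace n (E : Set (Ω × X)) v i → D.edge v i ∈ E₀) {P : Finset Ω}
    (hP : ∀ v, v ∈ P ↔ v ∈ D.cells n (E : Set (Ω × X))) : P.card ≤ 2 * E₀.card + 2 := by
  classical
  have hroot (v : Ω) (hv : v ∈ P) (k : ℕ) : D.root ^ k • v ∈ P :=
    (hP _).2 (root_pow_smul_mem_cells ((hP v).1 hv) k)
  obtain ⟨Q, hcard, hQ⟩ := exists_finset_meeting_moved_orbits (MulAction.injective D.root)
    fun v hv => by simpa only [pow_one] using hroot v hv 1
  have hedges := card_cellEdges_le hst hn hE hl hP fun v hv hmoved => by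
    simpa only [smul_iterate] using hQ v hv hmoved
  have htop := card_isTopAtEdge_zero_le hmin hfree hP
  have hsplit := P.card_filter_add_card_filter_not fun v => D.IsTopAtEdge P v 0
  have hvertices := D.card_cellVertices_add_card_le hroot
  omega

end Stabilizer

end CyclicWord

/-! ### Connecting the two paths -/

section EdgeGraph

open scoped Pointwise

variable {X Ω : Type*} [MulAction (FreeGroup X) Ω]

/-- The graph spanned by a set of edges of the Schreier graph of `Ω`. -/
def edgeGraph (E : Set (Ω × X)) : SimpleGraph Ω :=
  SimpleGraph.fromEdgeSet ((fun e => s(e.1, FreeGroup.of e.2 • e.1)) '' E)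

/-- The generators in `S`, their inverses and the identity, so that the powers of this set are the
balls in the word metric. -/
def lettersOf (S : Set X) : Set (FreeGroup X) :=
  insert 1 (FreeGroup.of '' S ∪ (FreeGroup.of '' S)⁻¹)

lemma finite_lettersOf_pow {S : Set X} (hS : S.Finite) (k : ℕ) : (lettersOf S ^ k).Finite := by
  induction k with
  | zero => exact Set.finite_one
  | succ k ih =>
    rw [pow_succ]
    exact ih.mul (((hS.image _).union (hS.image _).inv).insert 1)

variable {E : Set (Ω × X)} {S : Set X}

lemma reachable_edgeGraph_of_smul_iff {e : Ω × X} (he : e ∈ E) (p : Ω) :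
    (edgeGraph E).Reachable p (FreeGroup.of e.2 • e.1) ↔ (edgeGraph E).Reachable p e.1 := by
  by_cases hloop : e.1 = FreeGroup.of e.2 • e.1
  · rw [← hloop]
  · have hadj : (edgeGraph E).Adj e.1 (FreeGroup.of e.2 • e.1) :=
      (SimpleGraph.fromEdgeSet_adj _).2 ⟨⟨e, he, rfl⟩, hloop⟩
    exact ⟨fun h => h.trans hadj.symm.reachable, fun h => h.trans hadj.reachable⟩

lemma exists_lettersOf_smul_eq_of_adj (hS : ∀ e ∈ E, e.2 ∈ S) {v w : Ω}
    (h : (edgeGraph E).Adj v w) : ∃ g ∈ lettersOf S, g • v = w := by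
  obtain ⟨⟨e, he, hvw⟩, -⟩ := (SimpleGraph.fromEdgeSet_adj _).1 h
  have hgen : FreeGroup.of e.2 ∈ FreeGroup.of '' S := Set.mem_image_of_mem _ (hS e he)
  rcases Sym2.eq_iff.1 hvw with ⟨rfl, rfl⟩ | ⟨rfl, rfl⟩
  · exact ⟨_, Or.inr (Or.inl hgen), rfl⟩
  · exact ⟨_, Or.inr (Or.inr (Set.inv_mem_inv.2 hgen)), inv_smul_smul _ _⟩

lemma exists_lettersOf_pow_smul_eq_of_walk (hS : ∀ e ∈ E, e.2 ∈ S) {v w : Ω}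
    (W : (edgeGraph E).Walk v w) : ∃ g ∈ lettersOf S ^ W.length, g • v = w := by
  induction W with
  | nil => exact ⟨1, Set.one_mem_one, one_smul _ _⟩
  | cons h W ih =>
    obtain ⟨a, ha, rfl⟩ := exists_lettersOf_smul_eq_of_adj hS h
    obtain ⟨g, hg, rfl⟩ := ih
    exact ⟨g * a, by rw [SimpleGraph.Walk.length_cons, pow_succ]; exact Set.mul_mem_mul hg ha,
      mul_smul _ _ _⟩

lemma exists_lettersOf_pow_smul_eq {E : Finset (Ω × X)} (hS : ∀ e ∈ E, e.2 ∈ S) {N : ℕ}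
    (hN : E.card ≤ N) {v w : Ω} (h : (edgeGraph (E : Set (Ω × X))).Reachable v w) :
    ∃ g ∈ lettersOf S ^ N, g • v = w := by
  classical
  obtain ⟨W, hW⟩ := h.exists_isPath
  obtain ⟨g, hg, hgv⟩ := exists_lettersOf_pow_smul_eq_of_walk hS W
  refine ⟨g, Set.pow_subset_pow_right (Set.mem_insert _ _) (le_trans ?_ hN) hg, hgv⟩
  have hedges : W.edges.toFinset ⊆ E.image fun e => s(e.1, FreeGroup.of e.2 • e.1) := fun e he => by
    have := W.edges_subset_edgeSet (List.mem_toFinset.1 he)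
    rw [edgeGraph, SimpleGraph.edgeSet_fromEdgeSet, ← Finset.coe_image] at this
    exact this.1
  calc W.length = W.edges.toFinset.card := by
        rw [List.toFinset_card_of_nodup hW.isTrail.edges_nodup, W.length_edges]
    _ ≤ E.card := (Finset.card_le_card hedges).trans Finset.card_image_le

end EdgeGraph

section Indicator

variable {X Ω K : Type*} [Group K] [MulAction (FreeGroup X) Ω] {C : Set Ω} {l : List (X × Bool)}
  {ω : Ω}

lemma letter_smul_mem_iff {a : X × Bool}
    (h : FreeGroup.of (letterEdge a ω).2 • (letterEdge a ω).1 ∈ C ↔ (letterEdge a ω).1 ∈ C) :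
    (FreeGroup.mk [a] • ω ∈ C ↔ ω ∈ C) ∧ ((letterEdge a ω).1 ∈ C ↔ ω ∈ C) := by
  obtain ⟨x, _ | _⟩ := a
  · change (FreeGroup.of x • (FreeGroup.of x)⁻¹ • ω ∈ C ↔ (FreeGroup.of x)⁻¹ • ω ∈ C) at h
    rw [smul_inv_smul] at h
    exact ⟨h.symm, h.symm⟩
  · exact ⟨h, Iff.rfl⟩

lemma fst_mem_iff_of_mem_pathEdges
    (h : ∀ e ∈ pathEdges l ω, (FreeGroup.of e.2 • e.1 ∈ C ↔ e.1 ∈ C)) :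
    ∀ e ∈ pathEdges l ω, (e.1 ∈ C ↔ ω ∈ C) := by
  suffices (FreeGroup.mk l • ω ∈ C ↔ ω ∈ C) ∧ ∀ e ∈ pathEdges l ω, (e.1 ∈ C ↔ ω ∈ C) from this.2
  induction l with
  | nil => exact ⟨by rw [← FreeGroup.one_eq_mk, one_smul], fun _ he => (List.not_mem_nil he).elim⟩
  | cons a l ih =>
    obtain ⟨ha, hl⟩ := List.forall_mem_cons.1 h
    obtain ⟨hend, hedges⟩ := ih hl
    rw [freeGroup_mk_cons, mul_smul, ← hend]
    exact ⟨(letter_smul_mem_iff ha).1, List.forall_mem_cons.2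
      ⟨(letter_smul_mem_iff ha).2, fun e he => (hedges e he).trans hend.symm⟩⟩

lemma holonomy_const (π : FreeGroup X →* K) (w : FreeGroup X) (ω : Ω) :
    holonomy (fun e => π (FreeGroup.of e.2)) w ω = π w :=
  (eq_holonomy (c := fun w _ => π w) (fun _ _ => rfl) (fun v w _ => map_mul π v w) w ω).symm

open scoped Classical in
/-- The cochain which agrees with the homomorphism `π` on the edges issuing from `C` and is trivial
on the others; its holonomy detects whether a path lies in `C`. -/
noncomputable def indicatorCochain (π : FreeGroup X →* K) (C : Set Ω) (e : Ω × X) : K :=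
  if e.1 ∈ C then π (FreeGroup.of e.2) else 1

variable (π : FreeGroup X →* K)

lemma holonomy_indicatorCochain_of_mem
    (h : ∀ e ∈ pathEdges l ω, (FreeGroup.of e.2 • e.1 ∈ C ↔ e.1 ∈ C)) (hω : ω ∈ C) :
    holonomy (indicatorCochain π C) (FreeGroup.mk l) ω = π (FreeGroup.mk l) := by
  rw [← holonomy_const π _ ω]
  exact holonomy_congr fun e he => if_pos ((fst_mem_iff_of_mem_pathEdges h e he).2 hω)

lemma holonomy_indicatorCochain_of_notMem
    (h : ∀ e ∈ pathEdges l ω, (FreeGroup.of e.2 • e.1 ∈ C ↔ e.1 ∈ C)) (hω : ω ∉ C) :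
    holonomy (indicatorCochain π C) (FreeGroup.mk l) ω = 1 := by
  rw [← MonoidHom.one_apply (N := K) (FreeGroup.mk l), ← holonomy_const 1 _ ω]
  exact holonomy_congr fun e he => if_neg (mt (fst_mem_iff_of_mem_pathEdges h e he).1 hω)

end Indicator

namespace CyclicWord

section BoundedConjugator

variable {X Ω : Type u} [MulAction (FreeGroup X) Ω] {D : CyclicWord X} {n : ℕ}
  {U : Set (FreeGroup X)} {p : Ω} {l : List (X × Bool)}

lemma FlatExtends.anti {B : Set Ω} {E E' : Set (Ω × X)} (hE : D.FlatExtends n B E) (hsub : E' ⊆ E)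
    (hcells : D.cells n E ⊆ D.cells n E') : D.FlatExtends n B E' := fun K _ φ hφ => by
  obtain ⟨φ', heq, hflat⟩ := hE K φ fun v hv => hφ v (hcells hv)
  exact ⟨φ', heq.mono hsub, hflat⟩

lemma flatOn_indicatorCochain {K : Type*} [Group K] {π : FreeGroup X →* K}
    (hπ : π (D.root ^ n) = 1) {C : Set Ω} {E : Set (Ω × X)}
    (hC : ∀ e ∈ E, (FreeGroup.of e.2 • e.1 ∈ C ↔ e.1 ∈ C)) :
    D.FlatOn n (D.cells n E) (indicatorCochain π C) := fun v hv => by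
  have hedges : ∀ e ∈ pathEdges (D.segment 0 (n * D.length)) v,
      (FreeGroup.of e.2 • e.1 ∈ C ↔ e.1 ∈ C) := fun e he => by
    obtain ⟨t, -, rfl⟩ := D.mem_pathEdges_root_pow.1 he
    exact hC _ (hv.2 t)
  rw [root_pow_eq] at hπ ⊢
  by_cases hmem : v ∈ C
  · rw [holonomy_indicatorCochain_of_mem π hedges hmem, hπ]
  · exact holonomy_indicatorCochain_of_notMem π hedges hmem

lemma card_cellEdges_le_mul (D : CyclicWord X) (P : Finset Ω) :
    (D.cellEdges P).card ≤ P.card * D.length := by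
  classical
  exact Finset.card_image_le.trans_eq (by rw [Finset.card_product, Finset.card_range])

lemma edge_mem_cellEdges {P : Finset Ω} (hP : ∀ v ∈ P, ∀ k : ℕ, D.root ^ k • v ∈ P) {v : Ω}
    (hv : v ∈ P) (t : ℕ) : D.edge v t ∈ D.cellEdges P := by
  classical
  rw [edge_eq_mod]
  exact Finset.mem_image.2 ⟨(_, _), Finset.mem_product.2
    ⟨hP v hv _, Finset.mem_range.2 (Nat.mod_lt _ D.length_pos)⟩, rfl⟩

variable (D l) in
/-- The generators which occur in the root of `D` or in the word `l`. -/
def support : Set X := {x | x ∈ (D.segment 0 D.length ++ l).map Prod.fst}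

lemma finite_support : (D.support l).Finite := List.finite_toSet _

lemma snd_mem_support_of_mem_pathEdges {v : Ω} {e : Ω × X} (he : e ∈ pathEdges l v) :
    e.2 ∈ D.support l := by
  rw [support, Set.mem_ofPred_eq, List.map_append, ← map_snd_pathEdges l v]
  exact List.mem_append_right _ (List.mem_map_of_mem he)

lemma snd_mem_support_of_mem_cellEdges {P : Finset Ω} {e : Ω × X} (he : e ∈ D.cellEdges P) :
    e.2 ∈ D.support l := by
  classical
  obtain ⟨⟨v, t⟩, ha, rfl⟩ := Finset.mem_image.1 he
  rw [support, Set.mem_ofPred_eq, List.map_append, ← map_snd_pathEdges _ v]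
  refine List.mem_append_left _ (List.mem_map_of_mem ?_)
  rw [← one_mul D.length, mem_pathEdges_root_pow, one_mul]
  exact ⟨t, Finset.mem_range.1 (Finset.mem_product.1 ha).2, rfl⟩

variable (hst : MulAction.stabilizer (FreeGroup X) p =
    Subgroup.closure (insert (FreeGroup.mk l) (D.conjRelators n U)))
  {g : FreeGroup X}
  (hg : g⁻¹ * FreeGroup.mk l * g * (FreeGroup.mk l)⁻¹ ∈ Subgroup.closure (D.conjRelators n U))
include hst hg

/-- Flat cochains do not distinguish `g⁻¹ h g` from `h`, as these differ by a product of the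
conjugate relators. -/
lemma holonomy_eq_one_of_conj_mem {K : Type*} [Group K] {φ : Ω × X → K}
    (hφ : D.FlatOn n ((fun u => u⁻¹ • p) '' U) φ)
    (hφg : holonomy φ (FreeGroup.mk l) (g • p) = 1) : holonomy φ (FreeGroup.mk l) p = 1 := by
  have hrel := closure_conjRelators_le_flatStabilizer (conjRelators_subset_stabilizer hst) hφ hg
  have hfix : g⁻¹ * FreeGroup.mk l * g ∈ MulAction.stabilizer (FreeGroup X) p :=
    (Subgroup.mul_mem_cancel_right _ (inv_mem (mk_smul_eq_of_stabilizer_eq hst))).1 hrel.1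
  have hfix' : FreeGroup.mk l • g • p = g • p := by
    rwa [MulAction.mem_stabilizer_iff, mul_smul, mul_smul, inv_smul_eq_iff] at hfix
  have hconj : g⁻¹ * FreeGroup.mk l * g ∈ flatStabilizer φ p := by
    refine ⟨hfix, ?_⟩
    simpa only [inv_inv] using holonomy_conj_eq_one (u := g⁻¹) (ω := p) (φ := φ)
      (by rwa [inv_inv]) (by rwa [inv_inv])
  exact (inv_mem_iff.1 ((Subgroup.mul_mem_cancel_left _ hconj).1 hrel)).2

/-- A cochain which reads off the words along the component of `p` and is trivial elsewhere would
have trivial holonomy for `h` at `g • p` only. -/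
theorem reachable_of_conj_mem (hne : FreeGroup.mk l ∉ Subgroup.normalClosure {D.root ^ n})
    {E : Set (Ω × X)}
    (hE : D.FlatExtends n ((fun u => u⁻¹ • p) '' U) E) (hp : ∀ e ∈ pathEdges l p, e ∈ E)
    (hq : ∀ e ∈ pathEdges l (g • p), e ∈ E) : (edgeGraph E).Reachable p (g • p) := by
  by_contra hnot
  let C : Set Ω := {ω | (edgeGraph E).Reachable p ω}
  have hC (e : Ω × X) (he : e ∈ E) : FreeGroup.of e.2 • e.1 ∈ C ↔ e.1 ∈ C :=
    reachable_edgeGraph_of_smul_iff he p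
  let π := QuotientGroup.mk' (Subgroup.normalClosure {D.root ^ n})
  have hπ : π (D.root ^ n) = 1 :=
    (QuotientGroup.eq_one_iff _).2 (Subgroup.subset_normalClosure rfl)
  obtain ⟨φ, heq, hflat⟩ := hE _ (indicatorCochain π C) (flatOn_indicatorCochain hπ hC)
  have htriv : holonomy φ (FreeGroup.mk l) p = 1 := by
    refine holonomy_eq_one_of_conj_mem hst hg hflat ?_
    rw [holonomy_congr fun e he => heq (hq e he)]
    exact holonomy_indicatorCochain_of_notMem π (fun e he => hC e (hq e he)) hnot
  rw [holonomy_congr fun e he => heq (hp e he), holonomy_indicatorCochain_of_mem π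
    (fun e he => hC e (hp e he)) (SimpleGraph.Reachable.refl p)] at htriv
  exact hne ((QuotientGroup.eq_one_iff _).1 htriv)

omit hg in
lemma exists_flatExtends_cellEdges_union [DecidableEq (Ω × X)]
    [MulAction.IsPretransitive (FreeGroup X) Ω]
    [LinearOrder (FreeGroup X)] [MulLeftMono (FreeGroup X)] [MulRightMono (FreeGroup X)]
    (hmin : ∀ t, D.conjRoot 0 ≤ D.conjRoot t) (hn : 1 < n) (hU : U.Finite) {E₀ : Finset (Ω × X)}
    (hl : ∀ e ∈ pathEdges l p, e ∈ E₀) :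
    ∃ P : Finset Ω, P.card ≤ 2 * E₀.card + 2 ∧
      D.FlatExtends n ((fun u => u⁻¹ • p) '' U) (D.cellEdges P ∪ E₀ : Finset (Ω × X)) := by
  obtain ⟨E, hE₀E, hE, hfree⟩ := exists_collapsed (zero_lt_one.trans hn) (hU.image _)
    (root_pow_smul_of_conjRelators (conjRelators_subset_stabilizer hst)) E₀
  obtain ⟨P, hP⟩ := (finite_cells (D := D) (n := n) E).exists_finset
  have hroot (v : Ω) (hv : v ∈ P) (k : ℕ) : D.root ^ k • v ∈ P :=
    (hP _).2 (root_pow_smul_mem_cells ((hP v).1 hv) k)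
  have hcells : D.cells n (E : Set (Ω × X)) ⊆ D.cells n (D.cellEdges P ∪ E₀ : Finset (Ω × X)) :=
    fun v hv => ⟨hv.1, fun t => Finset.mem_coe.2 <| Finset.mem_union_left _ <|
      edge_mem_cellEdges hroot ((hP v).2 hv) t⟩
  have hsub : D.cellEdges P ∪ E₀ ⊆ E :=
    Finset.union_subset (Finset.coe_subset.1 (cellEdges_subset fun v hv => (hP v).1 hv)) hE₀E
  exact ⟨P, card_cells_le hst hmin hn hE (fun e he => hE₀E (hl e he)) hfree hP,
    hE.anti (Finset.coe_subset.2 hsub) hcells⟩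

open scoped Pointwise in
theorem exists_lettersOf_pow_smul_eq_of_conj_mem [MulAction.IsPretransitive (FreeGroup X) Ω]
    [LinearOrder (FreeGroup X)] [MulLeftMono (FreeGroup X)] [MulRightMono (FreeGroup X)]
    (hmin : ∀ t, D.conjRoot 0 ≤ D.conjRoot t) (hn : 1 < n) (hU : U.Finite)
    (hne : FreeGroup.mk l ∉ Subgroup.normalClosure {D.root ^ n}) :
    ∃ w ∈ lettersOf (D.support l) ^ ((4 * l.length + 2) * D.length + 2 * l.length),
      w • p = g • p := by
  classical
  let E₀ : Finset (Ω × X) := (pathEdges l p ++ pathEdges l (g • p)).toFinset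
  have hE₀ : E₀.card ≤ 2 * l.length := (List.toFinset_card_le _).trans_eq <| by
    rw [List.length_append, length_pathEdges, length_pathEdges, two_mul]
  have hp : ∀ e ∈ pathEdges l p, e ∈ E₀ := fun e he =>
    List.mem_toFinset.2 (List.mem_append_left _ he)
  have hq : ∀ e ∈ pathEdges l (g • p), e ∈ E₀ := fun e he =>
    List.mem_toFinset.2 (List.mem_append_right _ he)
  obtain ⟨P, hP, hE⟩ := exists_flatExtends_cellEdges_union hst hmin hn hU hp
  have hreach := reachable_of_conj_mem hst hg hne hE
    (fun e he => Finset.mem_coe.2 (Finset.mem_union_right _ (hp e he)))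
    fun e he => Finset.mem_coe.2 (Finset.mem_union_right _ (hq e he))
  refine exists_lettersOf_pow_smul_eq (fun e he => ?_) ?_ hreach
  · rcases Finset.mem_union.1 he with he | he
    · exact snd_mem_support_of_mem_cellEdges he
    · exact (List.mem_append.1 (List.mem_toFinset.1 he)).elim snd_mem_support_of_mem_pathEdges
        snd_mem_support_of_mem_pathEdges
  · calc (D.cellEdges P ∪ E₀).card ≤ P.card * D.length + E₀.card :=
          (Finset.card_union_le _ _).trans (Nat.add_le_add_right (D.card_cellEdges_le_mul P) _)
      _ ≤ (4 * l.length + 2) * D.length + 2 * l.length :=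
          add_le_add (Nat.mul_le_mul_right _ (by omega)) hE₀

end BoundedConjugator

end CyclicWord

/-! ### Centralizers in one-relator groups with torsion -/

section CosetsAndConjugates

variable {G : Type*} [Group G]

lemma isFiniteRelIndex_of_finite {H K : Subgroup G} {T : Set G} (hT : T.Finite)
    (h : ∀ g ∈ K, ∃ t ∈ T, t⁻¹ * g ∈ H) : H.IsFiniteRelIndex K := by
  choose t htT ht using fun g : K => h g g.2
  have : Finite T := hT
  have : Finite (K ⧸ H.subgroupOf K) :=
    Finite.of_injective (fun q => (⟨t q.out, htT q.out⟩ : T)) fun a b hab => by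
      replace hab : t a.out = t b.out := congrArg Subtype.val hab
      have hmem := H.mul_mem (H.inv_mem (ht a.out)) (hab ▸ ht b.out)
      rw [mul_inv_rev, inv_inv, mul_assoc, mul_inv_cancel_left] at hmem
      rw [← a.out_eq', ← b.out_eq']
      exact QuotientGroup.eq.2 hmem
  exact ⟨Subgroup.index_ne_zero_of_finite⟩

lemma exists_finite_subset_mem_closure {s : Set G} {g : G} (hg : g ∈ Subgroup.closure s) :
    ∃ t ⊆ s, t.Finite ∧ g ∈ Subgroup.closure t := by
  induction hg using Subgroup.closure_induction with
  | mem x hx => exact ⟨{x}, Set.singleton_subset_iff.2 hx, Set.finite_singleton x,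
      Subgroup.mem_closure_singleton_self x⟩
  | one => exact ⟨∅, Set.empty_subset s, Set.finite_empty, one_mem _⟩
  | mul x y _ _ hx hy =>
    obtain ⟨t, hts, ht, hx⟩ := hx
    obtain ⟨u, hus, hu, hy⟩ := hy
    exact ⟨t ∪ u, Set.union_subset hts hus, ht.union hu,
      mul_mem (Subgroup.closure_mono Set.subset_union_left hx)
        (Subgroup.closure_mono Set.subset_union_right hy)⟩
  | inv x _ hx =>
    obtain ⟨t, hts, ht, hx⟩ := hx
    exact ⟨t, hts, ht, inv_mem hx⟩

lemma normalClosure_singleton (r : G) :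
    Subgroup.normalClosure {r} = Subgroup.closure (conjugatesOf r) := by
  rw [Subgroup.normalClosure, Group.conjugatesOfSet, Set.biUnion_singleton]

end CosetsAndConjugates

namespace CyclicWord

section Centralizer

open scoped Pointwise

variable {X : Type u} {D : CyclicWord X} {n : ℕ}

lemma exists_finite_mem_closure_conjRelators {w : FreeGroup X}
    (hw : w ∈ Subgroup.normalClosure {D.root ^ n}) :
    ∃ U : Set (FreeGroup X), U.Finite ∧ w ∈ Subgroup.closure (D.conjRelators n U) := by
  have himage : conjugatesOf (D.root ^ n) = (fun u => u * D.root ^ n * u⁻¹) '' Set.univ :=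
    Set.ext fun _ => by rw [Set.image_univ]; exact isConj_iff
  rw [normalClosure_singleton, himage] at hw
  obtain ⟨U, -, hU⟩ := Set.exists_subset_image_finite_and.1 (exists_finite_subset_mem_closure hw)
  exact ⟨U, hU⟩

lemma closure_insert_conjRelators_le_comap {G : Type*} [Group G] {φ : FreeGroup X →* G}
    (hφ : φ (D.root ^ n) = 1) (w : FreeGroup X) (U : Set (FreeGroup X)) :
    Subgroup.closure (insert w (D.conjRelators n U)) ≤ (Subgroup.zpowers (φ w)).comap φ := by
  rw [Subgroup.closure_le, Set.insert_subset_iff]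
  refine ⟨Subgroup.mem_zpowers (φ w), ?_⟩
  rintro _ ⟨u, -, rfl⟩
  have hu : φ (u * D.root ^ n * u⁻¹) = 1 := by
    rw [map_mul, map_mul, hφ, mul_one, map_inv, mul_inv_cancel]
  exact Subgroup.mem_comap.2 (hu ▸ one_mem _)

variable [LinearOrder (FreeGroup X)] [MulLeftMono (FreeGroup X)] [MulRightMono (FreeGroup X)]

lemma exists_lettersOf_pow_inv_mul_mem_zpowers
    {G : Type*} [Group G] {φ : FreeGroup X →* G}
    (hφ : φ.ker = Subgroup.normalClosure {D.root ^ n})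
    (hmin : ∀ t, D.conjRoot 0 ≤ D.conjRoot t) (hn : 1 < n) {l : List (X × Bool)}
    (hl : φ (FreeGroup.mk l) ≠ 1) {g : FreeGroup X} (hg : Commute (φ g) (φ (FreeGroup.mk l))) :
    ∃ w ∈ lettersOf (D.support l) ^ ((4 * l.length + 2) * D.length + 2 * l.length),
      (φ w)⁻¹ * φ g ∈ Subgroup.zpowers (φ (FreeGroup.mk l)) := by
  have hcomm : g⁻¹ * FreeGroup.mk l * g * (FreeGroup.mk l)⁻¹ ∈ φ.ker := by
    rw [MonoidHom.mem_ker, map_mul, map_mul, map_mul, map_inv, map_inv, mul_assoc _ _ (φ g),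
      ← hg.eq, inv_mul_cancel_left, mul_inv_cancel]
  have hφ' : φ (D.root ^ n) = 1 :=
    MonoidHom.mem_ker.1 (hφ ▸ Subgroup.subset_normalClosure (Set.mem_singleton _))
  obtain ⟨U, hU, hgU⟩ := exists_finite_mem_closure_conjRelators (hφ ▸ hcomm)
  obtain ⟨w, hw, hwg⟩ := exists_lettersOf_pow_smul_eq_of_conj_mem
    (MulAction.stabilizer_quotient (Subgroup.closure (insert (FreeGroup.mk l)
      (D.conjRelators n U)))) hgU hmin hn hU (hφ ▸ mt MonoidHom.mem_ker.1 hl)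
  rw [MulAction.Quotient.smul_coe, MulAction.Quotient.smul_coe, smul_eq_mul, smul_eq_mul, mul_one,
    mul_one, QuotientGroup.eq] at hwg
  refine ⟨w, hw, ?_⟩
  rw [← map_inv, ← map_mul]
  exact closure_insert_conjRelators_le_comap hφ' _ U hwg

theorem finiteIndexCentralizers_of_ker_eq {G : Type*} [Group G] {φ : FreeGroup X →* G}
    (hsurj : Function.Surjective φ) (hφ : φ.ker = Subgroup.normalClosure {D.root ^ n})
    (hmin : ∀ t, D.conjRoot 0 ≤ D.conjRoot t) (hn : 1 < n) : FiniteIndexCentralizers G := by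
  intro h hne
  obtain ⟨v, rfl⟩ := hsurj h
  obtain ⟨l, rfl⟩ : ∃ l, FreeGroup.mk l = v := Quot.exists_rep v
  refine isFiniteRelIndex_of_finite ((finite_lettersOf_pow (finite_support (D := D) (l := l))
    ((4 * l.length + 2) * D.length + 2 * l.length)).image φ) fun g hg => ?_
  obtain ⟨g, rfl⟩ := hsurj g
  obtain ⟨w, hw, hwg⟩ := exists_lettersOf_pow_inv_mul_mem_zpowers hφ hmin hn hne
    (Subgroup.mem_centralizer_singleton_iff.1 hg)
  exact ⟨φ w, Set.mem_image_of_mem φ hw, hwg⟩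

end Centralizer

end CyclicWord

theorem finiteIndexCentralizers_presentedGroup {X : Type*} {R : FreeGroup X} (hR : R ≠ 1) {n : ℕ}
    (hn : 1 < n) : FiniteIndexCentralizers (PresentedGroup {R ^ n}) := by
  obtain ⟨_, _, _⟩ := exists_biorder_freeGroup X
  have := mulLeftMono_of_mulLeftStrictMono (FreeGroup X)
  have := mulRightMono_of_mulRightStrictMono (FreeGroup X)
  obtain ⟨D, hmin, k, hk, hconj⟩ := CyclicWord.exists_isConj_root_pow hR
  have hker : (PresentedGroup.mk {R ^ n}).ker = Subgroup.normalClosure {D.root ^ (k * n)} := by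
    rw [pow_mul, normalClosure_singleton, ← (hconj.pow n).conjugatesOf_eq,
      ← normalClosure_singleton]
    exact QuotientGroup.ker_mk' _
  exact CyclicWord.finiteIndexCentralizers_of_ker_eq (PresentedGroup.mk_surjective _) hker hmin
    (hn.trans_le (Nat.le_mul_of_pos_left n hk))

theorem statement_6_general {X : Type*} {R : FreeGroup X} (hR : R ≠ 1) {n : ℕ} (hn : 1 < n)
    {C : Subgroup (PresentedGroup {R ^ n})} (hC : VirtuallyZ C)
    (hD : ¬ ∃ D : Subgroup (PresentedGroup {R ^ n}),
      C ≤ D ∧ Nonempty (D ≃* DihedralGroup 0)) :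
    ∃ M : Subgroup (PresentedGroup {R ^ n}),
      M.IsMalnormal ∧ Nonempty (M ≃* Multiplicative ℤ) ∧ C ≤ M :=
  (finiteIndexCentralizers_presentedGroup hR hn).exists_isMalnormal hC hD

/-- A virtually-ℤ subgroup `C` of a one-relator group with torsion which
is not contained in any infinite dihedral subgroup is contained in a malnormal infinite
cyclic subgroup. -/
theorem statement_6 {X : Type} [Nontrivial X] (R : FreeGroup X) (n : ℕ)
    (hn : 1 < n) (hR : ∀ (S : FreeGroup X) (k : ℕ), 1 ≤ k → R = S ^ k → k = 1)
    (C : Subgroup (PresentedGroup {R ^ n})) (hC : VirtuallyZ C)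
    (hD : ¬ ∃ D : Subgroup (PresentedGroup {R ^ n}),
        C ≤ D ∧ Nonempty (D ≃* DihedralGroup 0)) :
    ∃ M : Subgroup (PresentedGroup {R ^ n}),
      M.IsMalnormal ∧ Nonempty (M ≃* Multiplicative ℤ) ∧ C ≤ M :=
  statement_6_general (fun h => absurd (hR 1 2 one_le_two (h.trans (one_pow 2).symm)) (by decide))
    hn hC hD
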